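/- arXiv:2511.01204 — 2 statements merged into one kernel-verified Lean document; each statement's English description precedes it below -/
import Mathlib

section
/- Let Ω ⊂ ℝ^n be a bounded open set and ε_i → 0. Suppose u_{ε_i} ∈ W^{1,2}(Ω; [-1,1]) satisfies J_{ε_i}(u_{ε_i}) ≤ E_0 < ∞ for all i. Then there is a subsequence of u_{ε_i} converging in L^1(Ω) and almost everywhere to some u_0 ∈ BV(Ω; {±1}) with total variation ∫_Ω |∇u_0| ≤ E_0/2. -/
open MeasureTheory Metric Set Filter
noncomputable section

/-- The divergence of a vector field `g : ℝⁿ → ℝⁿ`. -/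
def divg {n : ℕ} (g : EuclideanSpace ℝ (Fin n) → EuclideanSpace ℝ (Fin n))
    (x : EuclideanSpace ℝ (Fin n)) : ℝ :=
  ∑ i : Fin n, fderiv ℝ g x (EuclideanSpace.single i 1) i

/-- The set of numbers `∫_Ω u · div g` over admissible test vector fields `g`
(`C¹`, compactly supported in `Ω`, `‖g‖ ≤ 1`); its supremum is the total variation
`∫_Ω |∇u|` of `u` in `Ω`. -/
def tvSet {n : ℕ} (Ω : Set (EuclideanSpace ℝ (Fin n))) (u : EuclideanSpace ℝ (Fin n) → ℝ) :
    Set ℝ :=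
  { t | ∃ g : EuclideanSpace ℝ (Fin n) → EuclideanSpace ℝ (Fin n),
      ContDiff ℝ 1 g ∧ HasCompactSupport g ∧ tsupport g ⊆ Ω ∧ (∀ x, ‖g x‖ ≤ 1) ∧
      t = ∫ x in Ω, u x * divg g x }

/-! As `r → 0`, ball averages of `u_i` at radius `r` approach `u_i` in `L¹(Ω)` uniformly in `i`: the
fundamental theorem of calculus along segments turns translations into the gradient bound, and near
`∂Ω` boundedness of `u_i` together with the vanishing measure of the boundary layer suffices. At a
fixed radius, weak `L²` compactness makes ball averages converge pointwise along a subsequence, so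
`u_i` is a uniform limit of convergent sequences and hence Cauchy in `L¹(Ω)`. By AM-GM,
`2 |∇u| ≤ ε |∇u|² + 1 / ε`, while `∇u = 0` where `|u| = 1`, which is an extremum; this bounds
the gradients by `E₀ / 2` and passes to the limit by lower semicontinuity of the total variation.
Finally `|{|u_i| < 1}| ≤ ε_i E₀ → 0` forces `|u₀| = 1`. -/

open scoped ENNReal Topology

section FundamentalTheorem

variable {F : Type*} [NormedAddCommGroup F] [NormedSpace ℝ F] [CompleteSpace F]

lemma enorm_sub_le_lintegral_enorm_deriv {f : ℝ → F} {a b : ℝ} (hab : a ≤ b)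
    (hf : ∀ t ∈ Icc a b, DifferentiableAt ℝ f t) :
    ‖f b - f a‖ₑ ≤ ∫⁻ t in Icc a b, ‖deriv f t‖ₑ := by
  by_cases hfin : ∫⁻ t in Icc a b, ‖deriv f t‖ₑ = ∞
  · exact hfin ▸ le_top
  have hint : IntegrableOn (deriv f) (Icc a b) :=
    ⟨(stronglyMeasurable_deriv f).aestronglyMeasurable, lt_top_iff_ne_top.2 hfin⟩
  have hftc : ∫ t in Icc a b, deriv f t = f b - f a := by
    rw [integral_Icc_eq_integral_Ioc, ← intervalIntegral.integral_of_le hab]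
    refine intervalIntegral.integral_deriv_eq_sub (by rwa [uIcc_of_le hab]) ?_
    rwa [intervalIntegrable_iff_integrableOn_Icc_of_le hab]
  exact hftc ▸ enorm_integral_le_lintegral_enorm _

variable {E : Type*} [NormedAddCommGroup E] [NormedSpace ℝ E]

lemma enorm_add_sub_le_lintegral_enorm_fderiv {u : E → F} {x h : E}
    (hu : ∀ t ∈ Icc (0 : ℝ) 1, DifferentiableAt ℝ u (x + t • h)) :
    ‖u (x + h) - u x‖ₑ ≤ ‖h‖ₑ * ∫⁻ t in Icc (0 : ℝ) 1, ‖fderiv ℝ u (x + t • h)‖ₑ := by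
  have hderiv : ∀ t ∈ Icc (0 : ℝ) 1,
      HasDerivAt (fun t : ℝ ↦ u (x + t • h)) (fderiv ℝ u (x + t • h) h) t := fun t ht ↦ by
    have hline : HasDerivAt (fun t : ℝ ↦ x + t • h) h t := by
      simpa using ((hasDerivAt_id t).smul_const h).const_add x
    exact (hu t ht).hasFDerivAt.comp_hasDerivAt t hline
  calc ‖u (x + h) - u x‖ₑ
      ≤ ∫⁻ t in Icc (0 : ℝ) 1, ‖deriv (fun t : ℝ ↦ u (x + t • h)) t‖ₑ := by
        simpa using enorm_sub_le_lintegral_enorm_deriv zero_le_one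
          fun t ht ↦ (hderiv t ht).differentiableAt
    _ ≤ ∫⁻ t in Icc (0 : ℝ) 1, ‖h‖ₑ * ‖fderiv ℝ u (x + t • h)‖ₑ := by
        refine setLIntegral_mono' measurableSet_Icc fun t ht ↦ ?_
        rw [(hderiv t ht).deriv, mul_comm]
        exact ContinuousLinearMap.le_opENorm _ _
    _ = ‖h‖ₑ * ∫⁻ t in Icc (0 : ℝ) 1, ‖fderiv ℝ u (x + t • h)‖ₑ :=
        lintegral_const_mul' _ _ enorm_ne_top

variable [MeasurableSpace E] [BorelSpace E] [SecondCountableTopology E] {μ : Measure E} [SFinite μ]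

lemma setLIntegral_enorm_add_sub_le [μ.IsAddRightInvariant] {u : E → F} {Ω S : Set E}
    (hΩ : MeasurableSet Ω) (hS : MeasurableSet S) (hu : ∀ x ∈ Ω, DifferentiableAt ℝ u x) {h : E}
    (hseg : ∀ x ∈ S, ∀ t ∈ Icc (0 : ℝ) 1, x + t • h ∈ Ω) :
    ∫⁻ x in S, ‖u (x + h) - u x‖ₑ ∂μ ≤ ‖h‖ₑ * ∫⁻ x in Ω, ‖fderiv ℝ u x‖ₑ ∂μ := by
  set f : E → ℝ≥0∞ := Ω.indicator fun x ↦ ‖fderiv ℝ u x‖ₑ with hf_def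
  have hf : Measurable f := (measurable_fderiv ℝ u).enorm.indicator hΩ
  calc ∫⁻ x in S, ‖u (x + h) - u x‖ₑ ∂μ
      ≤ ∫⁻ x in S, ‖h‖ₑ * (∫⁻ t in Icc (0 : ℝ) 1, f (x + t • h)) ∂μ := by
        refine setLIntegral_mono' hS fun x hx ↦ ?_
        refine (enorm_add_sub_le_lintegral_enorm_fderiv fun t ht ↦
          hu _ (hseg x hx t ht)).trans_eq ?_
        congr 1
        exact setLIntegral_congr_fun measurableSet_Icc fun t ht ↦
          (indicator_of_mem (hseg x hx t ht) fun x ↦ ‖fderiv ℝ u x‖ₑ).symm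
    _ = ‖h‖ₑ * ∫⁻ t in Icc (0 : ℝ) 1, (∫⁻ x in S, f (x + t • h) ∂μ) := by
        rw [lintegral_const_mul' _ _ enorm_ne_top, lintegral_lintegral_swap]
        exact (hf.comp (by fun_prop)).aemeasurable
    _ ≤ ‖h‖ₑ * ∫⁻ _ in Icc (0 : ℝ) 1, (∫⁻ x, f x ∂μ) := by
        refine mul_le_mul_right (lintegral_mono fun t ↦ ?_) _
        exact (setLIntegral_le_lintegral _ _).trans_eq (lintegral_add_right_eq_self f (t • h))
    _ = ‖h‖ₑ * ∫⁻ x in Ω, ‖fderiv ℝ u x‖ₑ ∂μ := by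
        simp [hf_def, lintegral_indicator hΩ]

end FundamentalTheorem

section Average

variable {α F : Type*} [MeasurableSpace α] {ν : Measure α} [NormedAddCommGroup F] [NormedSpace ℝ F]

lemma enorm_average_sub_le [IsFiniteMeasure ν] [NeZero ν] [CompleteSpace F] {f : α → F}
    (hf : Integrable f ν) (c : F) :
    ‖(⨍ a, f a ∂ν) - c‖ₑ ≤ ⨍⁻ a, ‖f a - c‖ₑ ∂ν := by
  have hsub : (⨍ a, f a ∂ν) - c = ⨍ a, (f a - c) ∂ν := by
    simp only [average]
    rw [integral_sub hf.to_average (integrable_const c)]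
    simp
  exact hsub ▸ enorm_integral_le_lintegral_enorm _

lemma norm_average_le_of_norm_le {f : α → F} {M : ℝ} (hM : 0 ≤ M) (hf : ∀ a, ‖f a‖ ≤ M) :
    ‖⨍ a, f a ∂ν‖ ≤ M := by
  have hmass : ((ν univ)⁻¹ • ν).real univ ≤ 1 :=
    ENNReal.toReal_le_of_le_ofReal zero_le_one (by simp [ENNReal.inv_mul_le_one])
  exact (norm_integral_le_of_norm_le_const (ae_of_all _ hf)).trans (mul_le_of_le_one_right hM hmass)

end Average

section Translation

variable {E F : Type*} [NormedAddCommGroup E] [NormedAddCommGroup F]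

lemma add_smul_mem_of_notMem_thickening_compl [NormedSpace ℝ E] {Ω : Set E} {x h : E} {r t : ℝ}
    (hx : x ∉ thickening r Ωᶜ) (hh : ‖h‖ < r) (ht : t ∈ Icc (0 : ℝ) 1) : x + t • h ∈ Ω := by
  by_contra hxt
  refine hx (mem_thickening_iff.2 ⟨x + t • h, hxt, ?_⟩)
  have hle : t * ‖h‖ ≤ ‖h‖ := mul_le_of_le_one_left (norm_nonneg h) ht.2
  simpa [dist_eq_norm, norm_smul, abs_of_nonneg ht.1] using hle.trans_lt hh

lemma aestronglyMeasurable_comp_add [MeasurableSpace E] [BorelSpace E] [SecondCountableTopology E]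
    {μ ν : Measure E} [SFinite μ] [SFinite ν] [μ.IsAddLeftInvariant] {u : E → F}
    (hu : AEStronglyMeasurable u μ) :
    AEStronglyMeasurable (fun p : E × E ↦ u (p.1 + p.2)) (μ.prod ν) := by
  simpa only [Function.comp_def, add_comm] using
    hu.comp_quasiMeasurePreserving (quasiMeasurePreserving_add_swap μ ν)

end Translation

section BallAverage

variable {E F : Type*} [NormedAddCommGroup E] [MeasurableSpace E] [NormedAddCommGroup F]
  [NormedSpace ℝ F] {μ : Measure E} {r M : ℝ} {u : E → F}

/-- The average of `u` over the ball of radius `r` about `x`, written as an average of translates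
of `u`. -/
def ballAverage (μ : Measure E) (r : ℝ) (u : E → F) (x : E) : F :=
  ⨍ h in ball 0 r, u (x + h) ∂μ

lemma norm_ballAverage_le (hM : 0 ≤ M) (hu : ∀ x, ‖u x‖ ≤ M) (x : E) : ‖ballAverage μ r u x‖ ≤ M :=
  norm_average_le_of_norm_le hM fun _ ↦ hu _

variable [BorelSpace E]

lemma ballAverage_eq_smul_setIntegral [μ.IsAddLeftInvariant] (x : E) :
    ballAverage μ r u x = (μ.real (ball x r))⁻¹ • ∫ y in ball x r, u y ∂μ := by
  have hball : (x + ·) ⁻¹' ball x r = ball 0 r := by ext; simp [dist_eq_norm]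
  rw [ballAverage, setAverage_eq, ← hball, measureReal_def, measure_preimage_add,
    (measurePreserving_add_left μ x).setIntegral_preimage_emb (measurableEmbedding_addLeft x),
    ← measureReal_def]

variable [NormedSpace ℝ E] [FiniteDimensional ℝ E] [μ.IsAddHaarMeasure]

lemma aestronglyMeasurable_ballAverage (hu : AEStronglyMeasurable u μ) :
    AEStronglyMeasurable (ballAverage μ r u) μ :=
  (aestronglyMeasurable_comp_add hu).integral_prod_right'

lemma enorm_ballAverage_sub_le [CompleteSpace F] (hu : LocallyIntegrable u μ) (hr : 0 < r) (x : E) :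
    ‖ballAverage μ r u x - u x‖ₑ ≤ ⨍⁻ h in ball 0 r, ‖u (x + h) - u x‖ₑ ∂μ := by
  have : IsFiniteMeasure (μ.restrict (ball 0 r)) := ⟨by simpa using measure_ball_lt_top⟩
  have : NeZero (μ.restrict (ball (0 : E) r)) := ⟨by simpa using (measure_ball_pos μ 0 hr).ne'⟩
  have hball : (x + ·) ⁻¹' ball x r = ball 0 r := by ext; simp [dist_eq_norm]
  refine enorm_average_sub_le ?_ _
  rw [← hball]
  exact ((measurePreserving_add_left μ x).integrableOn_comp_preimage
    (measurableEmbedding_addLeft x)).2 <|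
    (hu.integrableOn_isCompact (isCompact_closedBall x r)).mono_set ball_subset_closedBall

lemma setLIntegral_compl_thickening_enorm_ballAverage_sub_le [CompleteSpace F] {Ω : Set E}
    (hΩ : MeasurableSet Ω) (hu : ∀ x ∈ Ω, DifferentiableAt ℝ u x) (hint : LocallyIntegrable u μ)
    (hr : 0 < r) :
    ∫⁻ x in (thickening r Ωᶜ)ᶜ, ‖ballAverage μ r u x - u x‖ₑ ∂μ
      ≤ ENNReal.ofReal r * ∫⁻ x in Ω, ‖fderiv ℝ u x‖ₑ ∂μ := by
  set S : Set E := (thickening r Ωᶜ)ᶜ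
  have hS : MeasurableSet S := isOpen_thickening.measurableSet.compl
  have : IsFiniteMeasure (μ.restrict (ball 0 r)) := ⟨by simpa using measure_ball_lt_top⟩
  have : NeZero (μ.restrict (ball (0 : E) r)) := ⟨by simpa using (measure_ball_pos μ 0 hr).ne'⟩
  have hmeas : AEMeasurable (fun p : E × E ↦ ‖u (p.1 + p.2) - u p.1‖ₑ)
      ((μ.restrict S).prod ((μ.restrict (ball 0 r) univ)⁻¹ • μ.restrict (ball 0 r))) := by
    have huS : AEStronglyMeasurable u (μ.restrict S) := hint.aestronglyMeasurable.restrict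
    refine (AEStronglyMeasurable.sub ?_ huS.comp_fst).enorm
    exact (aestronglyMeasurable_comp_add hint.aestronglyMeasurable).mono_ac
      (Measure.restrict_le_self.absolutelyContinuous.prod .rfl)
  calc ∫⁻ x in S, ‖ballAverage μ r u x - u x‖ₑ ∂μ
      ≤ ∫⁻ x in S, (⨍⁻ h in ball 0 r, ‖u (x + h) - u x‖ₑ ∂μ) ∂μ :=
        lintegral_mono (enorm_ballAverage_sub_le hint hr)
    _ = ⨍⁻ h in ball 0 r, (∫⁻ x in S, ‖u (x + h) - u x‖ₑ ∂μ) ∂μ := lintegral_lintegral_swap hmeas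
    _ ≤ ⨍⁻ _h in ball 0 r, (ENNReal.ofReal r * ∫⁻ x in Ω, ‖fderiv ℝ u x‖ₑ ∂μ) ∂μ := by
        refine laverage_mono_ae ?_
        filter_upwards [ae_restrict_mem measurableSet_ball] with h hh
        rw [mem_ball_zero_iff] at hh
        refine (setLIntegral_enorm_add_sub_le hΩ hS hu fun x hx t ht ↦
          add_smul_mem_of_notMem_thickening_compl hx hh ht).trans ?_
        gcongr
        rw [← ofReal_norm]
        exact ENNReal.ofReal_le_ofReal hh.le
    _ = ENNReal.ofReal r * ∫⁻ x in Ω, ‖fderiv ℝ u x‖ₑ ∂μ := laverage_const _ _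

lemma setLIntegral_enorm_ballAverage_sub_le [CompleteSpace F] {Ω : Set E}
    (hΩ : MeasurableSet Ω) (hu : ∀ x ∈ Ω, DifferentiableAt ℝ u x) (hint : LocallyIntegrable u μ)
    (hM : ∀ x, ‖u x‖ ≤ M) (hr : 0 < r) :
    ∫⁻ x in Ω, ‖ballAverage μ r u x - u x‖ₑ ∂μ ≤
      ENNReal.ofReal r * ∫⁻ x in Ω, ‖fderiv ℝ u x‖ₑ ∂μ +
        ENNReal.ofReal (M + M) * μ.restrict Ω (thickening r Ωᶜ) := by
  have hM₀ : 0 ≤ M := (norm_nonneg _).trans (hM 0)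
  have hbound : ∀ x, ‖ballAverage μ r u x - u x‖ₑ ≤ ENNReal.ofReal (M + M) := fun x ↦ by
    rw [← ofReal_norm]
    exact ENNReal.ofReal_le_ofReal (norm_sub_le_of_le (norm_ballAverage_le hM₀ hM x) (hM x))
  have hthick : MeasurableSet (thickening r Ωᶜ) := isOpen_thickening.measurableSet
  rw [← lintegral_add_compl _ hthick, add_comm]
  gcongr
  · refine le_trans ?_ (setLIntegral_compl_thickening_enorm_ballAverage_sub_le hΩ hu hint hr)
    exact lintegral_mono' (Measure.restrict_mono_measure Measure.restrict_le_self _) le_rfl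
  · exact (lintegral_mono hbound).trans_eq (setLIntegral_const _ _)

lemma exists_pos_forall_setLIntegral_enorm_ballAverage_sub_le [CompleteSpace F] {Ω : Set E}
    (hΩ : IsOpen Ω) (hfin : μ Ω ≠ ∞) {C η : ℝ≥0∞} (hC : C ≠ ∞) (hη : 0 < η) :
    ∃ r, 0 < r ∧ ∀ u : E → F, DifferentiableOn ℝ u Ω → LocallyIntegrable u μ →
      (∀ x, ‖u x‖ ≤ M) → ∫⁻ x in Ω, ‖fderiv ℝ u x‖ₑ ∂μ ≤ C →
        ∫⁻ x in Ω, ‖ballAverage μ r u x - u x‖ₑ ∂μ ≤ η := by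
  have : IsFiniteMeasure (μ.restrict Ω) := ⟨by simpa using hfin.lt_top⟩
  have hthick : Tendsto (fun r ↦ μ.restrict Ω (thickening r Ωᶜ)) (𝓝[>] 0) (𝓝 0) := by
    simpa [Measure.restrict_apply hΩ.measurableSet.compl] using
      tendsto_measure_thickening_of_isClosed (μ := μ.restrict Ω) ⟨1, one_pos, measure_ne_top _ _⟩
        hΩ.isClosed_compl
  have hradius : Tendsto ENNReal.ofReal (𝓝[>] 0) (𝓝 0) := by
    simpa using (ENNReal.continuous_ofReal.tendsto 0).mono_left nhdsWithin_le_nhds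
  have hlim : Tendsto (fun r ↦ ENNReal.ofReal r * C +
      ENNReal.ofReal (M + M) * μ.restrict Ω (thickening r Ωᶜ)) (𝓝[>] 0) (𝓝 0) := by
    simpa using (ENNReal.Tendsto.mul_const hradius (.inr hC)).add
      (ENNReal.Tendsto.const_mul hthick (.inr ENNReal.ofReal_ne_top))
  obtain ⟨r, hrη, hr⟩ := ((hlim.eventually_le_const hη).and self_mem_nhdsWithin).exists
  refine ⟨r, hr, fun u hu hint hM hgrad ↦ le_trans ?_ hrη⟩
  refine (setLIntegral_enorm_ballAverage_sub_le hΩ.measurableSet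
    (fun x hx ↦ hu.differentiableAt (hΩ.mem_nhds hx)) hint hM hr).trans ?_
  gcongr

end BallAverage

section WeakCompactness

lemma exists_subseq_tendsto_inner {H : Type*} [NormedAddCommGroup H] [InnerProductSpace ℝ H]
    [CompleteSpace H] [TopologicalSpace.SeparableSpace H] {R : ℝ} {x : ℕ → H}
    (hx : ∀ i, ‖x i‖ ≤ R) :
    ∃ φ : ℕ → ℕ, StrictMono φ ∧ ∃ y : H, ∀ z,
      Tendsto (fun i ↦ inner ℝ (x (φ i)) z) atTop (𝓝 (inner ℝ y z)) := by
  obtain ⟨ℓ, -, φ, hφ, hlim⟩ := WeakDual.isSeqCompact_closedBall ℝ H 0 R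
    (x := fun i ↦ StrongDual.toWeakDual (InnerProductSpace.toDual ℝ H (x i)))
    fun i ↦ by simpa using hx i
  refine ⟨φ, hφ, (InnerProductSpace.toDual ℝ H).symm (WeakDual.toStrongDual ℓ), fun z ↦ ?_⟩
  simpa [InnerProductSpace.toDual_symm_apply, Function.comp_def] using
    ((WeakDual.eval_continuous z).tendsto ℓ).comp hlim

variable {α : Type*} [MeasurableSpace α] {μ : Measure α}

lemma exists_subseq_tendsto_setIntegral [IsSeparable μ] {R : ℝ≥0∞} (hR : R ≠ ∞) {f : ℕ → α → ℝ}
    (hf : ∀ i, MemLp (f i) 2 μ) (hfR : ∀ i, eLpNorm (f i) 2 μ ≤ R) :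
    ∃ φ : ℕ → ℕ, StrictMono φ ∧ ∃ g : α → ℝ, ∀ s, MeasurableSet s → μ s ≠ ∞ →
      Tendsto (fun i ↦ ∫ a in s, f (φ i) a ∂μ) atTop (𝓝 (∫ a in s, g a ∂μ)) := by
  have : Fact ((2 : ℝ≥0∞) ≠ ∞) := ⟨ENNReal.ofNat_ne_top⟩
  have hnorm : ∀ i, ‖(hf i).toLp‖ ≤ R.toReal := fun i ↦ by
    rw [Lp.norm_toLp]
    exact ENNReal.toReal_mono hR (hfR i)
  obtain ⟨φ, hφ, g, hg⟩ := exists_subseq_tendsto_inner hnorm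
  refine ⟨φ, hφ, g, fun s hs hμs ↦ ?_⟩
  have hinner : ∀ h : Lp ℝ 2 μ,
      inner ℝ h (indicatorConstLp 2 hs hμs 1) = ∫ a in s, h a ∂μ := fun h ↦ by
    rw [real_inner_comm, L2.inner_indicatorConstLp_one]
  have hcoe : ∀ i, ∫ a in s, ((hf i).toLp : α → ℝ) a ∂μ = ∫ a in s, f i a ∂μ := fun i ↦
    integral_congr_ae (ae_restrict_of_ae (hf i).coeFn_toLp)
  simpa only [hinner, hcoe] using hg (indicatorConstLp 2 hs hμs 1)

end WeakCompactness

section Cauchy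

lemma cauchySeq_of_forall_exists_edist_le {X : Type*} [PseudoEMetricSpace X] {f : ℕ → X}
    (h : ∀ η > 0, ∃ g : ℕ → X, CauchySeq g ∧ ∀ i, edist (f i) (g i) ≤ η) : CauchySeq f := by
  refine EMetric.cauchySeq_iff.2 fun η hη ↦ ?_
  obtain ⟨δ, hδ, hδη⟩ := exists_between hη
  have hδ3 : 0 < δ / 3 := ENNReal.div_pos hδ.ne' (by simp)
  obtain ⟨g, hg, hfg⟩ := h (δ / 3) hδ3
  obtain ⟨N, hN⟩ := EMetric.cauchySeq_iff.1 hg (δ / 3) hδ3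
  refine ⟨N, fun m hm n hn ↦ ?_⟩
  calc edist (f m) (f n)
      ≤ edist (f m) (g m) + edist (g m) (g n) + edist (g n) (f n) := edist_triangle4 _ _ _ _
    _ ≤ δ / 3 + δ / 3 + δ / 3 :=
        add_le_add_three (hfg m) (hN m hm n hn).le (edist_comm (f n) _ ▸ hfg n)
    _ = δ := ENNReal.add_thirds δ
    _ < η := hδη

lemma exists_memLp_tendsto_eLpNorm_sub {α F : Type*} [MeasurableSpace α] [NormedAddCommGroup F]
    [CompleteSpace F] {ν : Measure α} {p : ℝ≥0∞} [Fact (1 ≤ p)] {f : ℕ → α → F}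
    (hf : ∀ i, MemLp (f i) p ν)
    (h : ∀ η > 0, ∃ g : ℕ → α → F, ∃ w, (∀ i, MemLp (g i) p ν) ∧ MemLp w p ν ∧
      Tendsto (fun i ↦ eLpNorm (g i - w) p ν) atTop (𝓝 0) ∧ ∀ i, eLpNorm (f i - g i) p ν ≤ η) :
    ∃ v, MemLp v p ν ∧ Tendsto (fun i ↦ eLpNorm (f i - v) p ν) atTop (𝓝 0) := by
  have hcauchy : CauchySeq fun i ↦ (hf i).toLp := by
    refine cauchySeq_of_forall_exists_edist_le fun η hη ↦ ?_
    obtain ⟨g, w, hg, hw, hgw, hfg⟩ := h η hη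
    refine ⟨fun i ↦ (hg i).toLp, ?_, fun i ↦ by rw [Lp.edist_toLp_toLp]; exact hfg i⟩
    exact ((Lp.tendsto_Lp_iff_tendsto_eLpNorm'' g hg w hw).2 hgw).cauchySeq
  obtain ⟨v, hv⟩ := cauchySeq_tendsto_of_complete hcauchy
  refine ⟨v, Lp.memLp v, (Lp.tendsto_Lp_iff_tendsto_eLpNorm'' f hf v (Lp.memLp v)).1 ?_⟩
  rwa [Lp.toLp_coeFn]

end Cauchy

section Compactness

lemma tendsto_eLpNorm_one_sub_of_norm_le {α F : Type*} [MeasurableSpace α] [NormedAddCommGroup F]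
    {ν : Measure α} [IsFiniteMeasure ν] {f : ℕ → α → F} {g : α → F} {M : ℝ}
    (hf : ∀ i, AEStronglyMeasurable (f i) ν) (hM : ∀ i a, ‖f i a‖ ≤ M)
    (hlim : ∀ᵐ a ∂ν, Tendsto (fun i ↦ f i a) atTop (𝓝 (g a))) :
    Tendsto (fun i ↦ eLpNorm (f i - g) 1 ν) atTop (𝓝 0) := by
  simpa only [eLpNorm_one_eq_lintegral_enorm, Pi.sub_apply, ofReal_norm] using
    tendsto_lintegral_norm_of_dominated_convergence hf (integrable_const M).2
      (fun i ↦ ae_of_all _ (hM i)) hlim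

variable {E : Type*} [NormedAddCommGroup E] [NormedSpace ℝ E] [FiniteDimensional ℝ E]
  [MeasurableSpace E] [BorelSpace E] {μ : Measure E} [μ.IsAddHaarMeasure]

lemma exists_subseq_tendsto_ballAverage {R : ℝ≥0∞} (hR : R ≠ ∞) {u : ℕ → E → ℝ}
    (hu : ∀ i, MemLp (u i) 2 μ) (huR : ∀ i, eLpNorm (u i) 2 μ ≤ R) :
    ∃ φ : ℕ → ℕ, StrictMono φ ∧ ∃ v : E → ℝ, ∀ r x,
      Tendsto (fun i ↦ ballAverage μ r (u (φ i)) x) atTop (𝓝 (ballAverage μ r v x)) := by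
  obtain ⟨φ, hφ, v, hv⟩ := exists_subseq_tendsto_setIntegral hR hu huR
  refine ⟨φ, hφ, v, fun r x ↦ ?_⟩
  simpa only [ballAverage_eq_smul_setIntegral] using
    (hv (ball x r) measurableSet_ball measure_ball_lt_top.ne).const_smul (μ.real (ball x r))⁻¹

variable {Ω : Set E} {C : ℝ≥0∞} {M : NNReal} {u : ℕ → E → ℝ}

lemma exists_subseq_tendsto_eLpNorm_of_memLp_two (hΩ : IsOpen Ω) (hfin : μ Ω ≠ ∞) {R : ℝ≥0∞}
    (hR : R ≠ ∞) (hC : C ≠ ∞) (hu : ∀ i, DifferentiableOn ℝ (u i) Ω) (hu2 : ∀ i, MemLp (u i) 2 μ)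
    (huR : ∀ i, eLpNorm (u i) 2 μ ≤ R) (hM : ∀ i x, ‖u i x‖ ≤ M)
    (hgrad : ∀ i, ∫⁻ x in Ω, ‖fderiv ℝ (u i) x‖ₑ ∂μ ≤ C) :
    ∃ φ : ℕ → ℕ, StrictMono φ ∧ ∃ v, MemLp v 1 (μ.restrict Ω) ∧
      Tendsto (fun i ↦ eLpNorm (u (φ i) - v) 1 (μ.restrict Ω)) atTop (𝓝 0) := by
  have : IsFiniteMeasure (μ.restrict Ω) := ⟨by simpa using hfin.lt_top⟩
  obtain ⟨φ, hφ, w, hw⟩ := exists_subseq_tendsto_ballAverage hR hu2 huR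
  have hmeas : ∀ r i, AEStronglyMeasurable (ballAverage μ r (u i)) (μ.restrict Ω) := fun r i ↦
    (aestronglyMeasurable_ballAverage (hu2 i).1).restrict
  have hbound : ∀ r i x, ‖ballAverage μ r (u i) x‖ ≤ M := fun r i ↦ norm_ballAverage_le M.2 (hM i)
  refine ⟨φ, hφ, exists_memLp_tendsto_eLpNorm_sub
    (fun i ↦ .of_bound (hu2 _).1.restrict M (ae_of_all _ (hM _))) fun η hη ↦ ?_⟩
  obtain ⟨r, -, hr⟩ := exists_pos_forall_setLIntegral_enorm_ballAverage_sub_le (F := ℝ) (M := M)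
    hΩ hfin hC hη
  refine ⟨fun i ↦ ballAverage μ r (u (φ i)), ballAverage μ r w,
    fun i ↦ .of_bound (hmeas r _) M (ae_of_all _ (hbound r _)), ?_, ?_, fun i ↦ ?_⟩
  · refine .of_bound (aestronglyMeasurable_of_tendsto_ae atTop (fun i ↦ hmeas r (φ i))
      (ae_of_all _ (hw r))) M (ae_of_all _ fun x ↦ ?_)
    exact le_of_tendsto' (hw r x).norm fun i ↦ hbound r _ x
  · exact tendsto_eLpNorm_one_sub_of_norm_le (fun i ↦ hmeas r _) (fun i ↦ hbound r _)
      (ae_of_all _ (hw r))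
  · rw [eLpNorm_sub_comm, eLpNorm_one_eq_lintegral_enorm]
    exact hr _ (hu _) ((hu2 _).locallyIntegrable one_le_two) (hM _) (hgrad _)

lemma exists_subseq_tendsto_eLpNorm_one (hΩ : IsOpen Ω) (hfin : μ Ω ≠ ∞) (hC : C ≠ ∞)
    (hu : ∀ i, DifferentiableOn ℝ (u i) Ω) (hM : ∀ i, ∀ x ∈ Ω, ‖u i x‖ ≤ M)
    (hgrad : ∀ i, ∫⁻ x in Ω, ‖fderiv ℝ (u i) x‖ₑ ∂μ ≤ C) :
    ∃ φ : ℕ → ℕ, StrictMono φ ∧ ∃ v, MemLp v 1 (μ.restrict Ω) ∧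
      Tendsto (fun i ↦ eLpNorm (u (φ i) - v) 1 (μ.restrict Ω)) atTop (𝓝 0) := by
  have : IsFiniteMeasure (μ.restrict Ω) := ⟨by simpa using hfin.lt_top⟩
  have hΩm : MeasurableSet Ω := hΩ.measurableSet
  have hae : ∀ i, ∀ᵐ x ∂μ.restrict Ω, ‖u i x‖ ≤ M := fun i ↦ ae_restrict_of_forall_mem hΩm (hM i)
  have hmem : ∀ i, MemLp (Ω.indicator (u i)) 2 μ := fun i ↦
    (memLp_indicator_iff_restrict hΩm).2 <|
      .of_bound ((hu i).continuousOn.aestronglyMeasurable hΩm) M (hae i)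
  have hnorm : ∀ i, eLpNorm (Ω.indicator (u i)) 2 μ ≤
      μ.restrict Ω univ ^ (2 : ℝ≥0∞).toReal⁻¹ * ENNReal.ofReal M := fun i ↦ by
    rw [eLpNorm_indicator_eq_eLpNorm_restrict hΩm]
    exact eLpNorm_le_of_ae_bound (hae i)
  have hfderiv : ∀ i, EqOn (fderiv ℝ (Ω.indicator (u i))) (fderiv ℝ (u i)) Ω := fun i x hx ↦
    (eqOn_indicator.eventuallyEq_of_mem (hΩ.mem_nhds hx)).fderiv_eq
  obtain ⟨φ, hφ, v, hv, hlim⟩ := exists_subseq_tendsto_eLpNorm_of_memLp_two hΩ hfin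
    (ENNReal.mul_ne_top (by finiteness) ENNReal.ofReal_ne_top) hC
    (fun i ↦ (hu i).congr eqOn_indicator) hmem hnorm
    (fun i x ↦ (norm_indicator_eq_indicator_norm _ _).trans_le
      (indicator_apply_le' (hM i x) fun _ ↦ M.2))
    (fun i ↦ (setLIntegral_congr_fun hΩm fun x hx ↦ by rw [hfderiv i hx]).trans_le (hgrad i))
  refine ⟨φ, hφ, v, hv, hlim.congr fun i ↦ eLpNorm_congr_ae ?_⟩
  filter_upwards [ae_restrict_mem hΩm] with x hx
  simp [hx]

lemma exists_subseq_tendsto_eLpNorm_one_and_ae (hΩ : IsOpen Ω) (hfin : μ Ω ≠ ∞) (hC : C ≠ ∞)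
    (hu : ∀ i, DifferentiableOn ℝ (u i) Ω) (hM : ∀ i, ∀ x ∈ Ω, ‖u i x‖ ≤ M)
    (hgrad : ∀ i, ∫⁻ x in Ω, ‖fderiv ℝ (u i) x‖ₑ ∂μ ≤ C) :
    ∃ φ : ℕ → ℕ, StrictMono φ ∧ ∃ v, MemLp v 1 (μ.restrict Ω) ∧
      Tendsto (fun i ↦ eLpNorm (u (φ i) - v) 1 (μ.restrict Ω)) atTop (𝓝 0) ∧
      ∀ᵐ x ∂μ.restrict Ω, Tendsto (fun i ↦ u (φ i) x) atTop (𝓝 (v x)) := by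
  obtain ⟨φ, hφ, v, hv, hlim⟩ := exists_subseq_tendsto_eLpNorm_one hΩ hfin hC hu hM hgrad
  have hmeas : ∀ i, AEStronglyMeasurable (u (φ i)) (μ.restrict Ω) := fun i ↦
    (hu _).continuousOn.aestronglyMeasurable hΩ.measurableSet
  obtain ⟨ψ, hψ, hae⟩ := (tendstoInMeasure_of_tendsto_eLpNorm one_ne_zero hmeas hv.1
    hlim).exists_seq_tendsto_ae
  exact ⟨φ ∘ ψ, hφ.comp hψ, v, hv, hlim.comp hψ.tendsto_atTop, hae⟩

end Compactness

section IntegrationByParts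

lemma integrable_mul_of_tsupport_subset {X : Type*} [TopologicalSpace X] [MeasurableSpace X]
    [OpensMeasurableSpace X] {μ : Measure X} [IsFiniteMeasureOnCompacts μ] {Ω : Set X}
    (hΩ : IsOpen Ω) {u H : X → ℝ} (hu : ContinuousOn u Ω) (hH : Continuous H)
    (hHc : HasCompactSupport H) (hHΩ : tsupport H ⊆ Ω) : Integrable (fun x ↦ u x * H x) μ :=
  (ContinuousOn.continuous_of_tsupport_subset (hu.mul hH.continuousOn) hΩ
    (tsupport_mul_subset_right.trans hHΩ)).integrable_of_hasCompactSupport hHc.mul_left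

variable {E : Type*} [NormedAddCommGroup E] [NormedSpace ℝ E] [MeasurableSpace E] [BorelSpace E]
  {μ : Measure E}

lemma integrable_clm_apply_mul {L : E → E →L[ℝ] ℝ} (hL : Integrable L μ) {G : E → ℝ}
    (hG : Continuous G) (hGc : HasCompactSupport G) (v : E) :
    Integrable (fun x ↦ L x v * G x) μ := by
  obtain ⟨M, hM⟩ := hGc.exists_bound_of_continuous hG
  exact ((ContinuousLinearMap.apply ℝ ℝ v).integrable_comp hL).mul_bdd
    hG.aestronglyMeasurable (ae_of_all _ hM)

lemma setIntegral_mul_fderiv_eq_neg_fderiv_mul [FiniteDimensional ℝ E] [μ.IsAddHaarMeasure]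
    {Ω : Set E} (hΩ : IsOpen Ω) {u G : E → ℝ}
    (hu : DifferentiableOn ℝ u Ω) (hu' : IntegrableOn (fderiv ℝ u) Ω μ) (hG : ContDiff ℝ 1 G)
    (hGc : HasCompactSupport G) (hGΩ : tsupport G ⊆ Ω) (v : E) :
    ∫ x in Ω, u x * fderiv ℝ G x v ∂μ = -∫ x in Ω, fderiv ℝ u x v * G x ∂μ := by
  have hG'Ω : tsupport (fun x ↦ fderiv ℝ G x v) ⊆ Ω :=
    (tsupport_fderiv_apply_subset ℝ v).trans hGΩ
  have hG' : Continuous fun x ↦ fderiv ℝ G x v :=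
    (hG.continuous_fderiv one_ne_zero).clm_apply continuous_const
  have hG_zero : ∀ x ∉ Ω, G x = 0 := fun x hx ↦
    image_eq_zero_of_notMem_tsupport fun h ↦ hx (hGΩ h)
  have hG'_zero : ∀ x ∉ Ω, fderiv ℝ G x v = 0 := fun x hx ↦
    image_eq_zero_of_notMem_tsupport (f := fun x ↦ fderiv ℝ G x v) fun h ↦ hx (hG'Ω h)
  rw [setIntegral_eq_integral_of_forall_compl_eq_zero fun x hx ↦ by rw [hG'_zero x hx, mul_zero],
    setIntegral_eq_integral_of_forall_compl_eq_zero fun x hx ↦ by rw [hG_zero x hx, mul_zero]]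
  refine integral_mul_fderiv_eq_neg_fderiv_mul_of_integrable ?_
    (integrable_mul_of_tsupport_subset hΩ hu.continuousOn hG' (hGc.fderiv_apply ℝ v) hG'Ω)
    (integrable_mul_of_tsupport_subset hΩ hu.continuousOn hG.continuous hGc hGΩ)
    (fun x hx ↦ hu.differentiableAt (hΩ.mem_nhds (hGΩ hx)))
    (fun x _ ↦ hG.differentiable one_ne_zero x)
  refine (integrableOn_iff_integrable_of_support_subset fun x hx ↦ ?_).1
    (integrable_clm_apply_mul hu' hG.continuous hGc v)
  exact by_contra fun hxΩ ↦ hx (by simp [hG_zero x hxΩ])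

end IntegrationByParts

section TotalVariation

variable {n : ℕ} {Ω : Set (EuclideanSpace ℝ (Fin n))} {u : EuclideanSpace ℝ (Fin n) → ℝ}
  {g : EuclideanSpace ℝ (Fin n) → EuclideanSpace ℝ (Fin n)}

lemma continuous_divg (hg : ContDiff ℝ 1 g) : Continuous (divg g) := by
  have := hg.continuous_fderiv one_ne_zero
  unfold divg
  fun_prop

lemma hasCompactSupport_divg (hg : HasCompactSupport g) : HasCompactSupport (divg g) := by
  refine (hg.fderiv ℝ).mono fun x hx hx' ↦ hx ?_
  simp [divg, hx']

lemma setIntegral_mul_divg (hΩ : IsOpen Ω) (hu : DifferentiableOn ℝ u Ω)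
    (hu' : IntegrableOn (fderiv ℝ u) Ω) (hg : ContDiff ℝ 1 g) (hgc : HasCompactSupport g)
    (hgΩ : tsupport g ⊆ Ω) :
    ∫ x in Ω, u x * divg g x = -∫ x in Ω, fderiv ℝ u x (g x) := by
  let e (j : Fin n) : EuclideanSpace ℝ (Fin n) := EuclideanSpace.single j 1
  let G (j : Fin n) (x : EuclideanSpace ℝ (Fin n)) : ℝ := g x j
  have hG j : ContDiff ℝ 1 (G j) := (EuclideanSpace.proj (𝕜 := ℝ) j).contDiff.comp hg
  have hG_supp j : Function.support (G j) ⊆ Function.support g := fun x hx hgx ↦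
    hx (by simp [G, hgx])
  have hGc j : HasCompactSupport (G j) := hgc.mono (hG_supp j)
  have hGΩ j : tsupport (G j) ⊆ Ω := (closure_mono (hG_supp j)).trans hgΩ
  have hdivg x : divg g x = ∑ j, fderiv ℝ (G j) x (e j) :=
    Finset.sum_congr rfl fun j _ ↦ by
      have := (EuclideanSpace.proj (𝕜 := ℝ) j).hasFDerivAt.comp x
        (hg.differentiable one_ne_zero x).hasFDerivAt
      exact (DFunLike.congr_fun this.fderiv (e j)).symm
  have hexpand x : fderiv ℝ u x (g x) = ∑ j, fderiv ℝ u x (e j) * G j x := by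
    conv_lhs => rw [← (EuclideanSpace.basisFun (Fin n) ℝ).sum_repr (g x)]
    simp [e, G, mul_comm]
  simp_rw [hdivg, hexpand, Finset.mul_sum]
  rw [integral_finsetSum _ fun j _ ↦ ?_, integral_finsetSum _ fun j _ ↦ ?_,
    ← Finset.sum_neg_distrib]
  · exact Finset.sum_congr rfl fun j _ ↦
      setIntegral_mul_fderiv_eq_neg_fderiv_mul hΩ hu hu' (hG j) (hGc j) (hGΩ j) (e j)
  · exact integrable_clm_apply_mul hu' (hG j).continuous (hGc j) (e j)
  · exact (integrable_mul_of_tsupport_subset hΩ hu.continuousOn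
      (((hG j).continuous_fderiv one_ne_zero).clm_apply continuous_const)
      ((hGc j).fderiv_apply ℝ (e j))
      ((tsupport_fderiv_apply_subset ℝ (e j)).trans (hGΩ j))).integrableOn

lemma ofReal_le_setLIntegral_enorm_fderiv (hΩ : IsOpen Ω) (hu : DifferentiableOn ℝ u Ω) {t : ℝ}
    (ht : t ∈ tvSet Ω u) : ENNReal.ofReal t ≤ ∫⁻ x in Ω, ‖fderiv ℝ u x‖ₑ := by
  by_cases hfin : ∫⁻ x in Ω, ‖fderiv ℝ u x‖ₑ = ∞
  · exact hfin ▸ le_top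
  obtain ⟨g, hg, hgc, hgΩ, hg1, rfl⟩ := ht
  have hu' : IntegrableOn (fderiv ℝ u) Ω :=
    ⟨(measurable_fderiv ℝ u).aestronglyMeasurable, lt_top_iff_ne_top.2 hfin⟩
  calc ENNReal.ofReal (∫ x in Ω, u x * divg g x)
      ≤ ‖∫ x in Ω, u x * divg g x‖ₑ := Real.ofReal_le_enorm _
    _ = ‖∫ x in Ω, fderiv ℝ u x (g x)‖ₑ := by
        rw [setIntegral_mul_divg hΩ hu hu' hg hgc hgΩ, enorm_neg]
    _ ≤ ∫⁻ x in Ω, ‖fderiv ℝ u x (g x)‖ₑ := enorm_integral_le_lintegral_enorm _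
    _ ≤ ∫⁻ x in Ω, ‖fderiv ℝ u x‖ₑ := by
        refine lintegral_mono fun x ↦ (ContinuousLinearMap.le_opENorm _ _).trans ?_
        refine mul_le_of_le_one_right' ?_
        rw [← ofReal_norm, ENNReal.ofReal_le_one]
        exact hg1 x

lemma mem_upperBounds_tvSet_of_tendsto {us : ℕ → EuclideanSpace ℝ (Fin n) → ℝ} {c : ℝ}
    (hus : ∀ i, IntegrableOn (us i) Ω) (hu : IntegrableOn u Ω)
    (hlim : Tendsto (fun i ↦ eLpNorm (us i - u) 1 (volume.restrict Ω)) atTop (𝓝 0))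
    (hc : ∀ i, c ∈ upperBounds (tvSet Ω (us i))) : c ∈ upperBounds (tvSet Ω u) := by
  rintro _ ⟨g, hg, hgc, hgΩ, hg1, rfl⟩
  obtain ⟨K, hK⟩ := (hasCompactSupport_divg hgc).exists_bound_of_continuous (continuous_divg hg)
  have integrable_mul {w : EuclideanSpace ℝ (Fin n) → ℝ} (hw : IntegrableOn w Ω volume) :
      IntegrableOn (fun x ↦ w x * divg g x) Ω :=
    Integrable.mul_bdd hw (continuous_divg hg).aestronglyMeasurable (ae_of_all _ hK)
  have hbound i : eLpNorm (fun x ↦ us i x * divg g x - u x * divg g x) 1 (volume.restrict Ω) ≤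
      ENNReal.ofReal K * eLpNorm (us i - u) 1 (volume.restrict Ω) :=
    eLpNorm_le_mul_eLpNorm_of_ae_le_mul (ae_of_all _ fun x ↦ by
      rw [← sub_mul, norm_mul, mul_comm]
      exact mul_le_mul_of_nonneg_right (hK x) (norm_nonneg _)) 1
  have hlim_mul : Tendsto (fun i ↦ ENNReal.ofReal K * eLpNorm (us i - u) 1 (volume.restrict Ω))
      atTop (𝓝 0) := by
    simpa only [mul_zero] using ENNReal.Tendsto.const_mul hlim (.inr ENNReal.ofReal_ne_top)
  exact le_of_tendsto'
    (tendsto_integral_of_L1' _ (integrable_mul hu).aestronglyMeasurable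
      (.of_forall fun i ↦ integrable_mul (hus i))
      (tendsto_of_tendsto_of_tendsto_of_le_of_le tendsto_const_nhds hlim_mul
        (fun _ ↦ zero_le) hbound))
    fun i ↦ hc i ⟨g, hg, hgc, hgΩ, hg1, rfl⟩

end TotalVariation

section Limits

variable {X Y : Type*} [MeasurableSpace X] {ν : Measure X}

lemma ae_frequently_of_tendsto_measure_zero {p : ℕ → X → Prop}
    (hp : Tendsto (fun i ↦ ν {x | ¬p i x}) atTop (𝓝 0)) : ∀ᵐ x ∂ν, ∃ᶠ i in atTop, p i x := by
  have htail N : ∀ᵐ x ∂ν, ∃ i ≥ N, p i x := by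
    refine le_antisymm (ge_of_tendsto hp ?_) zero_le
    filter_upwards [eventually_ge_atTop N] with i hi
    exact measure_mono fun x hx hpx ↦ hx ⟨i, hi, hpx⟩
  filter_upwards [ae_all_iff.2 htail] with x hx using frequently_atTop.2 hx

lemma ae_mem_of_tendsto_of_tendsto_measure_zero [TopologicalSpace Y] {F : Set Y}
    (hF : IsClosed F) {f : ℕ → X → Y} {g : X → Y}
    (hfg : ∀ᵐ x ∂ν, Tendsto (fun i ↦ f i x) atTop (𝓝 (g x)))
    (hf : Tendsto (fun i ↦ ν {x | f i x ∉ F}) atTop (𝓝 0)) : ∀ᵐ x ∂ν, g x ∈ F := by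
  filter_upwards [hfg, ae_frequently_of_tendsto_measure_zero hf] with x hx hfreq
  exact hF.mem_of_frequently_of_tendsto hfreq hx

lemma tendsto_integral_norm_sub_of_tendsto_eLpNorm {F : Type*} [NormedAddCommGroup F]
    {f : ℕ → X → F} {g : X → F} (hf : ∀ i, AEStronglyMeasurable (f i) ν)
    (hg : AEStronglyMeasurable g ν) (h : Tendsto (fun i ↦ eLpNorm (f i - g) 1 ν) atTop (𝓝 0)) :
    Tendsto (fun i ↦ ∫ x, ‖f i x - g x‖ ∂ν) atTop (𝓝 0) := by
  simp_rw [eLpNorm_one_eq_lintegral_enorm] at h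
  exact ((ENNReal.tendsto_toReal ENNReal.zero_ne_top).comp h).congr fun i ↦
    (integral_norm_eq_lintegral_enorm ((hf i).sub hg)).symm

end Limits

section Energy

variable {E : Type*} [NormedAddCommGroup E] [InnerProductSpace ℝ E] [CompleteSpace E]
  {Ω : Set E} {u : E → ℝ} {ε : ℝ}

lemma gradient_eq_zero_of_one_le_abs (hΩ : IsOpen Ω) (hu : ∀ x ∈ Ω, u x ∈ Icc (-1 : ℝ) 1) {x : E}
    (hx : x ∈ Ω) (hux : 1 ≤ |u x|) : gradient u x = 0 := by
  have hextr : IsLocalExtr u x := by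
    rcases le_abs.1 hux with h | h
    · exact .inr (mem_of_superset (hΩ.mem_nhds hx) fun y hy ↦ (hu y hy).2.trans h)
    · exact .inl (mem_of_superset (hΩ.mem_nhds hx) fun y hy ↦
        (le_neg_of_le_neg h).trans (hu y hy).1)
  simp [gradient, hextr.fderiv_eq_zero]

variable [MeasurableSpace E] {μ : Measure E}

/-- The free boundary Allen–Cahn energy `J_ε(u) = ∫_Ω (ε |∇u|² + χ_{(-1,1)}(u) / ε)` with respect to
`μ`, as an extended nonnegative real so that it is meaningful without integrability assumptions. -/
def allenCahnEnergy (μ : Measure E) (ε : ℝ) (Ω : Set E) (u : E → ℝ) : ℝ≥0∞ :=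
  ∫⁻ x in Ω, ENNReal.ofReal
    (ε * ‖gradient u x‖ ^ 2 + (if |u x| < 1 then (1 : ℝ) else 0) / ε) ∂μ

lemma two_mul_le_mul_sq_add_one_div (hε : 0 < ε) (a : ℝ) : 2 * a ≤ ε * a ^ 2 + 1 / ε := by
  have hsq : ε * a ^ 2 + 1 / ε - 2 * a = (ε * a - 1) ^ 2 / ε := by field_simp; ring
  linarith [show 0 ≤ (ε * a - 1) ^ 2 / ε by positivity]

lemma setLIntegral_enorm_fderiv_le_allenCahnEnergy_div_two [OpensMeasurableSpace E]
    (hε : 0 < ε) (hΩ : IsOpen Ω) (hu : ∀ x ∈ Ω, u x ∈ Icc (-1 : ℝ) 1) :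
    ∫⁻ x in Ω, ‖fderiv ℝ u x‖ₑ ∂μ ≤ allenCahnEnergy μ ε Ω u / 2 := by
  rw [ENNReal.le_div_iff_mul_le (by simp) (by simp), mul_comm, allenCahnEnergy,
    ← lintegral_const_mul _ (measurable_fderiv ℝ u).enorm]
  refine setLIntegral_mono' hΩ.measurableSet fun x hx ↦ ?_
  have hnorm : ‖gradient u x‖ = ‖fderiv ℝ u x‖ := by simp [gradient]
  rw [← ofReal_norm, ← hnorm, ← ENNReal.ofReal_ofNat, ← ENNReal.ofReal_mul zero_le_two]
  refine ENNReal.ofReal_le_ofReal ?_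
  split_ifs with h
  · exact two_mul_le_mul_sq_add_one_div hε _
  · simp [gradient_eq_zero_of_one_le_abs hΩ hu hx (not_lt.1 h)]

lemma measure_abs_ne_one_le_mul_allenCahnEnergy (hε : 0 < ε) (hΩ : MeasurableSet Ω)
    (hum : AEMeasurable u (μ.restrict Ω)) (hu : ∀ x ∈ Ω, u x ∈ Icc (-1 : ℝ) 1) :
    μ.restrict Ω {x | |u x| ≠ 1} ≤ ENNReal.ofReal ε * allenCahnEnergy μ ε Ω u := by
  have hmeas : NullMeasurableSet {x | |u x| ≠ 1} (μ.restrict Ω) :=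
    hum.abs.nullMeasurable (measurableSet_singleton 1).compl
  rw [← lintegral_indicator_one₀ hmeas, allenCahnEnergy,
    ← lintegral_const_mul' _ _ ENNReal.ofReal_ne_top]
  refine setLIntegral_mono' hΩ fun x hx ↦ indicator_apply_le' (fun hne ↦ ?_) fun _ ↦ zero_le
  have hlt : |u x| < 1 := lt_of_le_of_ne (abs_le.2 (hu x hx)) hne
  rw [← ENNReal.ofReal_mul hε.le, Pi.one_apply, ENNReal.one_le_ofReal, if_pos hlt, mul_add,
    mul_one_div_cancel hε.ne']
  exact le_add_of_nonneg_left (by positivity)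

lemma tendsto_measure_abs_ne_one {us : ℕ → E → ℝ} {εs : ℕ → ℝ} {C : ℝ≥0∞} (hC : C ≠ ∞)
    (hεpos : ∀ i, 0 < εs i) (hεlim : Tendsto εs atTop (𝓝 0)) (hΩ : MeasurableSet Ω)
    (hmeas : ∀ i, AEMeasurable (us i) (μ.restrict Ω))
    (hrange : ∀ i, ∀ x ∈ Ω, us i x ∈ Icc (-1 : ℝ) 1)
    (henergy : ∀ i, allenCahnEnergy μ (εs i) Ω (us i) ≤ C) :
    Tendsto (fun i ↦ μ.restrict Ω {x | |us i x| ≠ 1}) atTop (𝓝 0) := by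
  have hlim : Tendsto (fun i ↦ ENNReal.ofReal (εs i) * C) atTop (𝓝 0) := by
    simpa only [ENNReal.ofReal_zero, zero_mul] using
      ENNReal.Tendsto.mul_const (ENNReal.tendsto_ofReal hεlim) (.inr hC)
  refine tendsto_of_tendsto_of_tendsto_of_le_of_le tendsto_const_nhds hlim
    (fun _ ↦ zero_le) fun i ↦ ?_
  exact (measure_abs_ne_one_le_mul_allenCahnEnergy (hεpos i) hΩ (hmeas i) (hrange i)).trans
    (by gcongr; exact henergy i)

end Energy

theorem stmt_3_general {n : ℕ} {Ω : Set (EuclideanSpace ℝ (Fin n))} (hΩ : IsOpen Ω)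
    (hfin : volume Ω ≠ ∞) {E₀ : ℝ} (hE₀ : 0 ≤ E₀) {εs : ℕ → ℝ} (hεpos : ∀ i, 0 < εs i)
    (hεlim : Tendsto εs atTop (𝓝 0)) {us : ℕ → EuclideanSpace ℝ (Fin n) → ℝ}
    (hrange : ∀ i, ∀ x ∈ Ω, us i x ∈ Icc (-1 : ℝ) 1)
    (hdiff : ∀ i, DifferentiableOn ℝ (us i) Ω)
    (henergy : ∀ i, allenCahnEnergy volume (εs i) Ω (us i) ≤ ENNReal.ofReal E₀) :
    ∃ φ : ℕ → ℕ, StrictMono φ ∧ ∃ u₀ : EuclideanSpace ℝ (Fin n) → ℝ,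
      (∀ᵐ x ∂volume.restrict Ω, |u₀ x| = 1) ∧
      Tendsto (fun i ↦ ∫ x in Ω, |us (φ i) x - u₀ x|) atTop (𝓝 0) ∧
      (∀ᵐ x ∂volume.restrict Ω, Tendsto (fun i ↦ us (φ i) x) atTop (𝓝 (u₀ x))) ∧
      BddAbove (tvSet Ω u₀) ∧ sSup (tvSet Ω u₀) ≤ E₀ / 2 := by
  have hgrad i : ∫⁻ x in Ω, ‖fderiv ℝ (us i) x‖ₑ ≤ ENNReal.ofReal (E₀ / 2) := by
    rw [ENNReal.ofReal_div_of_pos two_pos, ENNReal.ofReal_ofNat]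
    exact (setLIntegral_enorm_fderiv_le_allenCahnEnergy_div_two (hεpos i) hΩ (hrange i)).trans
      (ENNReal.div_le_div_right (henergy i) 2)
  have hbound i x (hx : x ∈ Ω) : ‖us i x‖ ≤ (1 : NNReal) := abs_le.2 (hrange i x hx)
  have hmeas i : AEStronglyMeasurable (us i) (volume.restrict Ω) :=
    (hdiff i).continuousOn.aestronglyMeasurable hΩ.measurableSet
  have hint i : IntegrableOn (us i) Ω := .of_bound hfin.lt_top (hmeas i) 1
    ((ae_restrict_mem hΩ.measurableSet).mono (hbound i))
  obtain ⟨φ, hφ, u₀, hu₀, hL1, hae⟩ := exists_subseq_tendsto_eLpNorm_one_and_ae hΩ hfin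
    ENNReal.ofReal_ne_top hdiff hbound hgrad
  have hone : ∀ᵐ x ∂volume.restrict Ω, |u₀ x| = 1 :=
    ae_mem_of_tendsto_of_tendsto_measure_zero (isClosed_singleton.preimage continuous_abs) hae
      ((tendsto_measure_abs_ne_one ENNReal.ofReal_ne_top hεpos hεlim hΩ.measurableSet
        (fun i ↦ (hmeas i).aemeasurable) hrange henergy).comp hφ.tendsto_atTop)
  have hTV : E₀ / 2 ∈ upperBounds (tvSet Ω u₀) :=
    mem_upperBounds_tvSet_of_tendsto (fun i ↦ hint (φ i)) (memLp_one_iff_integrable.1 hu₀) hL1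
      fun i t ht ↦ (ENNReal.ofReal_le_ofReal_iff (by positivity)).1
        ((ofReal_le_setLIntegral_enorm_fderiv hΩ (hdiff (φ i)) ht).trans (hgrad (φ i)))
  exact ⟨φ, hφ, u₀, hone, tendsto_integral_norm_sub_of_tendsto_eLpNorm
    (fun i ↦ hmeas (φ i)) hu₀.1 hL1, hae, ⟨E₀ / 2, hTV⟩, Real.sSup_le hTV (by positivity)⟩

/-- **BV compactness for bounded-energy sequences.**
If `Ω ⊂ ℝⁿ` is bounded open, `εᵢ → 0`, and `u_{εᵢ} ∈ W^{1,2}(Ω;[-1,1])` satisfy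
`J_{εᵢ}(u_{εᵢ}) ≤ E₀`, then along a subsequence `u_{εᵢ}` converges in `L¹(Ω)` and
a.e. to some `u₀ ∈ BV(Ω; {±1})` with total variation `∫_Ω |∇u₀| ≤ E₀/2`. -/
theorem stmt_3 (n : ℕ) (Ω : Set (EuclideanSpace ℝ (Fin n))) (hΩo : IsOpen Ω)
    (hΩb : Bornology.IsBounded Ω) (E₀ : ℝ) (hE₀ : 0 < E₀)
    (εs : ℕ → ℝ) (hεpos : ∀ i, 0 < εs i) (hεlim : Tendsto εs atTop (nhds 0))
    (us : ℕ → EuclideanSpace ℝ (Fin n) → ℝ)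
    (hrange : ∀ i x, us i x ∈ Icc (-1 : ℝ) 1)
    (hdiff : ∀ i, DifferentiableOn ℝ (us i) Ω)
    (henergy : ∀ i,
      (∫⁻ x in Ω, ENNReal.ofReal
          (εs i * ‖gradient (us i) x‖ ^ 2 + (if |us i x| < 1 then (1 : ℝ) else 0) / εs i))
        ≤ ENNReal.ofReal E₀) :
    ∃ φ : ℕ → ℕ, StrictMono φ ∧
      ∃ u₀ : EuclideanSpace ℝ (Fin n) → ℝ,
        (∀ᵐ x ∂(volume.restrict Ω), |u₀ x| = 1) ∧
        Tendsto (fun i => ∫ x in Ω, |us (φ i) x - u₀ x|) atTop (nhds 0) ∧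
        (∀ᵐ x ∂(volume.restrict Ω), Tendsto (fun i => us (φ i) x) atTop (nhds (u₀ x))) ∧
        BddAbove (tvSet Ω u₀) ∧ sSup (tvSet Ω u₀) ≤ E₀ / 2 :=
  stmt_3_general hΩo hΩb.measure_lt_top.ne hE₀.le hεpos hεlim (fun i x _ ↦ hrange i x) hdiff henergy
end
end

section
/- Let Ω ⊂ ℝ^n be a bounded open set with smooth boundary and u ∈ L^1(Ω;[-1,1]). Then there exists a family u_ε ∈ L^1(Ω;[-1,1]) with u_ε → u in L^1(Ω) and limsup_{ε→0+} J_ε(u_ε) ≤ J_0(u), where J_ε(v) = ∫_Ω ( ε|∇v|² + χ_{(-1,1)}(v)/ε ) dx and J_0(u) = 2∫_Ω|∇u| if u ∈ BV(Ω;{±1}), +∞ otherwise. -/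
open MeasureTheory Metric Set Filter Classical
noncomputable section

/-- The free boundary Allen–Cahn energy `J_ε(v) = ∫_Ω ε|∇v|² + χ_{(-1,1)}(v)/ε`
for `v ∈ W^{1,2}` (modelled as differentiability on `Ω`), `+∞` otherwise. -/
def Jeps {n : ℕ} (Ω : Set (EuclideanSpace ℝ (Fin n))) (ε : ℝ)
    (v : EuclideanSpace ℝ (Fin n) → ℝ) : ENNReal :=
  if DifferentiableOn ℝ v Ω then
    ∫⁻ x in Ω, ENNReal.ofReal
      (ε * ‖gradient v x‖ ^ 2 + (if |v x| < 1 then (1 : ℝ) else 0) / ε)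
  else ⊤

/-- The limit functional `J₀(u) = 2∫_Ω |∇u|` if `u ∈ BV(Ω;{±1})`, `+∞` otherwise. -/
def Jzero {n : ℕ} (Ω : Set (EuclideanSpace ℝ (Fin n)))
    (u : EuclideanSpace ℝ (Fin n) → ℝ) : ENNReal :=
  if (∀ᵐ x ∂(volume.restrict Ω), |u x| = 1) ∧ BddAbove (tvSet Ω u) then
    ENNReal.ofReal (2 * sSup (tvSet Ω u))
  else ⊤

/-- `Ω` has smooth boundary (local smooth defining functions with nonvanishing gradient). -/
def HasSmoothBoundary {n : ℕ} (Ω : Set (EuclideanSpace ℝ (Fin n))) : Prop :=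
  ∀ x ∈ frontier Ω, ∃ (U : Set (EuclideanSpace ℝ (Fin n))) (f : EuclideanSpace ℝ (Fin n) → ℝ),
    IsOpen U ∧ x ∈ U ∧ ContDiffOn ℝ (⊤ : ℕ∞) f U ∧
    (∀ y ∈ U, (y ∈ Ω ↔ f y < 0)) ∧ (∀ y ∈ U, (y ∈ frontier Ω ↔ f y = 0)) ∧
    ∀ y ∈ U, gradient f y ≠ 0

open ContinuousLinearMap (lsmul)
open scoped Topology ContDiff ENNReal NNReal Convolution

/-!
Pushing `Ω` slightly into itself along a smooth field that points inward at every boundary point,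
and then mollifying, gives smooth `w` with `w → u` in `L¹(Ω)` and `∫_Ω |∇w| ≤ ∫_Ω |∇u| + δ`.
The energy bound for the mollified function is by duality: test the total variation with the
mollification of `-∇w / |∇w|`.

No set is smoothed and no signed distance is needed: for a positive `C¹` majorant `m` of `|∇w|`
with `∫_Ω m ≈ ∫_Ω |∇w|`, the quotient `(w - t) / m` has gradient of norm about at most one close to
`{w = t}`. Hence the transition profile at `(w - t) / (ε m)` has gradient of norm about at most
`1 / ε`, and equals `±1` outside the layer `{|w - t| < (1 + κ) ε m}`, so its energy is about
`2 / ε` times the volume of the layer. By Fubini the average of that volume over the levels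
`|t| ≤ 1 - δ` is about `ε ∫_Ω m`, so some level `t` does at least as well. As `|t| ≤ 1 - δ` and
`u = ±1`, the profile differs from `u` only where `|w - u| ≥ δ / 2`, which is a set of small volume.
-/

/-! ### The transition profile -/

lemma hasDerivAt_average_sub_add {F : Type*} [NormedAddCommGroup F] [NormedSpace ℝ F]
    [CompleteSpace F] {f : ℝ → F} (hf : Continuous f) (κ x : ℝ) :
    HasDerivAt (fun y ↦ ⨍ t in (y - κ)..(y + κ), f t)
      ((2 * κ)⁻¹ • (f (x + κ) - f (x - κ))) x := by
  have hP (y : ℝ) : HasDerivAt (fun b ↦ ∫ t in (0 : ℝ)..b, f t) (f y) y :=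
    (hf.integral_hasStrictDerivAt 0 y).hasDerivAt
  refine ((((hP (x + κ)).comp_add_const x κ).sub
    ((hP (x - κ)).comp_sub_const x κ)).const_smul (2 * κ)⁻¹).congr_of_eventuallyEq
      (Eventually.of_forall fun y ↦ ?_)
  simp only [interval_average_eq, Pi.smul_apply, Pi.sub_apply,
    intervalIntegral.integral_interval_sub_left (hf.intervalIntegrable _ _)
      (hf.intervalIntegrable _ _)]
  ring_nf

lemma average_sub_add_mem {F : Type*} [NormedAddCommGroup F] [NormedSpace ℝ F]
    [CompleteSpace F] {f : ℝ → F} (hf : Continuous f) {s : Set F} (hs : Convex ℝ s)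
    (hsc : IsClosed s) {κ x : ℝ} (hκ : 0 < κ)
    (hfs : ∀ t ∈ Icc (x - κ) (x + κ), f t ∈ s) :
    ⨍ t in (x - κ)..(x + κ), f t ∈ s := by
  have hlt : x - κ < x + κ := by linarith
  have hint : IntegrableOn f (Ioc (x - κ) (x + κ)) :=
    hf.integrableOn_Icc.mono_set Ioc_subset_Icc_self
  rw [uIoc_of_le hlt.le]
  refine hs.set_average_mem hsc (by simp [hκ]) (by simp) ?_ hint
  filter_upwards [ae_restrict_mem measurableSet_Ioc] with t ht
    using hfs t (Ioc_subset_Icc_self ht)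

/-- A `C¹` approximation of the optimal transition profile `x ↦ max (-1) (min x 1)`, obtained
by averaging the latter over the interval of radius `κ` around `x`. -/
def transitionProfile (κ x : ℝ) : ℝ :=
  ⨍ t in (x - κ)..(x + κ), max (-1) (min t 1)

lemma continuous_truncation : Continuous fun t : ℝ ↦ max (-1) (min t 1) := by fun_prop

namespace transitionProfile

variable {κ x : ℝ}

lemma differentiable (κ : ℝ) : Differentiable ℝ (transitionProfile κ) := fun x ↦
  (hasDerivAt_average_sub_add continuous_truncation κ x).differentiableAt

lemma mem_Icc (hκ : 0 < κ) (x : ℝ) : transitionProfile κ x ∈ Icc (-1) 1 :=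
  average_sub_add_mem continuous_truncation (convex_Icc _ _) isClosed_Icc hκ fun t _ ↦
    ⟨le_max_left _ _, max_le (by norm_num) (min_le_right _ _)⟩

lemma eq_one (hκ : 0 < κ) (hx : 1 + κ ≤ x) : transitionProfile κ x = 1 := by
  refine average_sub_add_mem continuous_truncation (convex_singleton _) isClosed_singleton hκ
    fun t ht ↦ ?_
  rw [min_eq_right (by linarith [ht.1])]
  exact max_eq_right (by norm_num)

lemma eq_neg_one (hκ : 0 < κ) (hx : x ≤ -(1 + κ)) : transitionProfile κ x = -1 := by
  refine average_sub_add_mem continuous_truncation (convex_singleton _) isClosed_singleton hκ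
    fun t ht ↦ max_eq_left ((min_le_left _ _).trans ?_)
  linarith [ht.2]

lemma abs_eq_one (hκ : 0 < κ) (hx : 1 + κ ≤ |x|) : |transitionProfile κ x| = 1 := by
  rcases le_abs'.1 hx with h | h
  · simp [eq_neg_one hκ h]
  · simp [eq_one hκ h]

lemma abs_deriv_le_one (hκ : 0 < κ) (x : ℝ) : |deriv (transitionProfile κ) x| ≤ 1 := by
  have hlip : LipschitzWith 1 fun t : ℝ ↦ max (-1) (min t 1) :=
    (LipschitzWith.id.min_const 1).const_max (-1)
  have hdist := hlip.dist_le_mul (x + κ) (x - κ)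
  have hderiv := (hasDerivAt_average_sub_add continuous_truncation κ x).deriv
  change deriv (transitionProfile κ) x = _ at hderiv
  rw [hderiv, smul_eq_mul, abs_mul, abs_of_pos (by positivity), inv_mul_le_one₀ (by positivity)]
  rw [Real.dist_eq, Real.dist_eq, show x + κ - (x - κ) = 2 * κ by ring,
    abs_of_pos (by positivity : 0 < 2 * κ)] at hdist
  simpa using hdist

lemma deriv_eq_zero (hκ : 0 < κ) (hx : 1 + κ ≤ |x|) : deriv (transitionProfile κ) x = 0 := by
  rcases le_abs'.1 hx with h | h
  · refine IsLocalMin.deriv_eq_zero (Eventually.of_forall fun y ↦ ?_)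
    exact (eq_neg_one hκ h).trans_le (mem_Icc hκ y).1
  · refine IsLocalMax.deriv_eq_zero (Eventually.of_forall fun y ↦ ?_)
    exact (mem_Icc hκ y).2.trans_eq (eq_one hκ h).symm

end transitionProfile

/-! ### Inward directions -/

/-- `v` is an inward (hypertangent) direction of `Ω` at `z`: short segments that leave points of
`closure Ω` near `z` in directions close to `v` enter `Ω`. A bounded open set with such a direction
at each boundary point is a Lipschitz domain. -/
def IsInwardDirection {E : Type*} [NormedAddCommGroup E] [NormedSpace ℝ E] (Ω : Set E)
    (z v : E) : Prop :=
  ∀ᶠ q : E × ℝ × E in 𝓝 (z, 0, v), q.1 ∈ closure Ω → 0 < q.2.1 → q.1 + q.2.1 • q.2.2 ∈ Ω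

namespace IsInwardDirection

variable {E : Type*} [NormedAddCommGroup E] [NormedSpace ℝ E] {Ω : Set E} {z v : E}

lemma eventually_nhds (h : IsInwardDirection Ω z v) :
    ∀ᶠ y in 𝓝 z, IsInwardDirection Ω y v :=
  (Continuous.tendsto (by fun_prop : Continuous fun y : E ↦ (y, (0 : ℝ), v)) z).eventually
    (Filter.Eventually.eventually_nhds h)

lemma of_mem (hΩ : IsOpen Ω) (hz : z ∈ Ω) (v : E) : IsInwardDirection Ω z v := by
  have hcont : Continuous fun q : E × ℝ × E ↦ q.1 + q.2.1 • q.2.2 := by fun_prop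
  filter_upwards [hcont.continuousAt.preimage_mem_nhds (hΩ.mem_nhds (by simpa using hz))]
    with q hq _ _ using hq

lemma convex (Ω : Set E) (z : E) : Convex ℝ {v | IsInwardDirection Ω z v} := by
  rw [convex_iff_forall_pos]
  intro v₁ h₁ v₂ h₂ a b ha hb hab
  obtain ⟨v, hv⟩ : ∃ v, v = a • v₁ + b • v₂ := ⟨_, rfl⟩
  have lim₁ : Tendsto (fun q : E × ℝ × E ↦ (q.1, a * q.2.1, v₁ + (q.2.2 - v)))
      (𝓝 (z, 0, v)) (𝓝 (z, 0, v₁)) :=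
    (by fun_prop : Continuous _).tendsto' _ _ (by simp)
  have lim₂ : Tendsto
      (fun q : E × ℝ × E ↦ (q.1 + (a * q.2.1) • (v₁ + (q.2.2 - v)), b * q.2.1, v₂ + (q.2.2 - v)))
      (𝓝 (z, 0, v)) (𝓝 (z, 0, v₂)) :=
    (by fun_prop : Continuous _).tendsto' _ _ (by simp)
  rw [← hv]
  filter_upwards [lim₁.eventually h₁, lim₂.eventually h₂] with q hq₁ hq₂ hcl hpos
  have hmem := hq₂ (subset_closure (hq₁ hcl (mul_pos ha hpos))) (mul_pos hb hpos)
  have hsplit : q.2.2 = a • (v₁ + (q.2.2 - v)) + b • (v₂ + (q.2.2 - v)) :=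
    calc q.2.2 = (a • v₁ + b • v₂) + (1 : ℝ) • (q.2.2 - v) := by rw [← hv]; module
      _ = _ := by rw [← hab]; module
  convert hmem using 1
  conv_lhs => rw [hsplit]
  module

lemma of_hasStrictFDerivAt {f : E → ℝ} {f' : E →L[ℝ] ℝ} (hf : HasStrictFDerivAt f f' z)
    (hv : f' v < 0) (hneg : ∀ᶠ y in 𝓝 z, f y < 0 → y ∈ Ω)
    (hcl : ∀ᶠ y in 𝓝 z, y ∈ closure Ω → f y ≤ 0) : IsInwardDirection Ω z v := by
  obtain ⟨c, hc, hcv⟩ : ∃ c > 0, f' v + c * ‖v‖ < 0 := by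
    have hlim : Tendsto (fun c : ℝ ↦ f' v + c * ‖v‖) (𝓝[>] 0) (𝓝 (f' v)) :=
      ((by fun_prop : Continuous fun c : ℝ ↦ f' v + c * ‖v‖).tendsto' 0 _ (by simp)).mono_left
        nhdsWithin_le_nhds
    exact ((eventually_mem_nhdsWithin.and (hlim.eventually_lt_const hv))).exists
  have hstep : Tendsto (fun q : E × ℝ × E ↦ q.1 + q.2.1 • q.2.2) (𝓝 (z, 0, v)) (𝓝 z) :=
    (by fun_prop : Continuous _).tendsto' _ _ (by simp)
  have hdir : ∀ᶠ q : E × ℝ × E in 𝓝 (z, 0, v), f' q.2.2 + c * ‖q.2.2‖ < 0 :=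
    (by fun_prop : Continuous fun q : E × ℝ × E ↦ f' q.2.2 + c * ‖q.2.2‖).tendsto _
      |>.eventually_lt_const hcv
  filter_upwards [(hstep.prodMk_nhds (continuous_fst.tendsto (z, (0 : ℝ), v))).eventually
    (hf.isLittleO.def hc), hstep.eventually hneg, (continuous_fst.tendsto _).eventually hcl, hdir]
    with ⟨x, s, d⟩ hlin hneg hcl hdir hx hs
  refine hneg ?_
  simp only [add_sub_cancel_left, map_smul, smul_eq_mul, norm_smul, Real.norm_eq_abs,
    abs_of_pos hs] at hlin
  have hdecr := mul_neg_of_pos_of_neg hs hdir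
  linarith [(abs_le.1 hlin).2, hcl hx]

end IsInwardDirection

lemma HasSmoothBoundary.exists_isInwardDirection {n : ℕ} {Ω : Set (EuclideanSpace ℝ (Fin n))}
    (hΩ : HasSmoothBoundary Ω) {z : EuclideanSpace ℝ (Fin n)} (hz : z ∈ frontier Ω) :
    ∃ v, IsInwardDirection Ω z v := by
  obtain ⟨U, f, hU, hzU, hf, hneg, hzero, hgrad⟩ := hΩ z hz
  have hUz := hU.mem_nhds hzU
  refine ⟨-gradient f z, .of_hasStrictFDerivAt
    ((hf.contDiffAt hUz).hasStrictFDerivAt (by simp)) ?_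
    (mem_of_superset hUz fun y hy ↦ (hneg y hy).2)
    (mem_of_superset hUz fun y hy hcl ↦ ?_)⟩
  · have hpos : 0 < ‖gradient f z‖ := norm_pos_iff.2 (hgrad z hzU)
    rw [← toDual_gradient, map_neg, InnerProductSpace.toDual_apply_apply,
      real_inner_self_eq_norm_sq]
    exact neg_lt_zero.2 (by positivity)
  · by_cases hy' : y ∈ Ω
    · exact ((hneg y hy).1 hy').le
    · exact ((hzero y hy).1 ⟨hcl, fun h ↦ hy' (interior_subset h)⟩).le

lemma exists_contDiff_isInwardDirection {E : Type*} [NormedAddCommGroup E] [NormedSpace ℝ E]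
    [FiniteDimensional ℝ E] {Ω : Set E} (hΩb : Bornology.IsBounded Ω)
    (hΩ : ∀ z ∈ closure Ω, ∃ v, IsInwardDirection Ω z v) :
    ∃ X : E → E, ContDiff ℝ ∞ X ∧ HasCompactSupport X ∧
      ∀ z ∈ closure Ω, IsInwardDirection Ω z (X z) := by
  obtain ⟨R, hR⟩ := hΩb.closure.subset_ball 0
  let t (z : E) : Set E := {v | (z ∈ closure Ω → IsInwardDirection Ω z v) ∧ (z ∉ ball 0 R → v = 0)}
  have hconv (z : E) : Convex ℝ (t z) := by
    by_cases hz : z ∈ closure Ω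
    · simpa [t, hz, hR hz, -mem_ball] using IsInwardDirection.convex Ω z
    · by_cases hz' : z ∈ ball 0 R
      · simpa [t, hz, hz', -mem_ball] using convex_univ
      · simp [t, hz, hz', -mem_ball]
  have hloc (z : E) : ∃ v, ∀ᶠ y in 𝓝 z, v ∈ t y := by
    by_cases hz : z ∈ closure Ω
    · obtain ⟨v, hv⟩ := hΩ z hz
      refine ⟨v, ?_⟩
      filter_upwards [hv.eventually_nhds, isOpen_ball.mem_nhds (hR hz)] with y hy hy'
      exact ⟨fun _ ↦ hy, fun h ↦ absurd hy' h⟩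
    · refine ⟨0, ?_⟩
      filter_upwards [isClosed_closure.isOpen_compl.mem_nhds hz] with y hy
      exact ⟨fun h ↦ absurd h hy, fun _ ↦ rfl⟩
  obtain ⟨X, hX⟩ := exists_contMDiffMap_forall_mem_convex_of_local_const (n := (⊤ : ℕ∞))
    (modelWithCornersSelf ℝ E) hconv hloc
  refine ⟨X, X.contMDiff.contDiff, ?_, fun z ↦ (hX z).1⟩
  refine .of_support_subset_isCompact (isCompact_closedBall 0 R) fun z hz ↦ ?_
  by_contra hz'
  exact hz ((hX z).2 fun h ↦ hz' (ball_subset_closedBall h))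

lemma eventually_mapsTo_add_smul {E : Type*} [NormedAddCommGroup E] [NormedSpace ℝ E]
    {Ω : Set E} (hΩ : IsCompact (closure Ω)) {X : E → E} (hXc : Continuous X)
    (hX : ∀ z ∈ closure Ω, IsInwardDirection Ω z (X z)) :
    ∀ᶠ s : ℝ in 𝓝[>] 0, MapsTo (fun x ↦ x + s • X x) (closure Ω) Ω := by
  have hloc : ∀ z ∈ closure Ω, ∀ᶠ q : ℝ × E in 𝓝 (0, z),
      q.2 ∈ closure Ω → 0 < q.1 → q.2 + q.1 • X q.2 ∈ Ω := fun z hz ↦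
    ((by fun_prop : Continuous fun q : ℝ × E ↦ (q.2, q.1, X q.2)).tendsto (0, z)).eventually
      (hX z hz)
  filter_upwards [nhdsWithin_le_nhds (hΩ.eventually_forall_of_forall_eventually
      (P := fun s x ↦ x ∈ closure Ω → 0 < s → x + s • X x ∈ Ω) hloc),
    self_mem_nhdsWithin] with s hs hpos x hx using hs x hx hx hpos

/-! ### Perturbations of the identity -/

section NearIdentity

variable {E : Type*} [NormedAddCommGroup E] [NormedSpace ℝ E]

lemma eventually_forall_norm_smul_le {α F : Type*} [NormedAddCommGroup F] [NormedSpace ℝ F]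
    {f : α → F} {C : ℝ} (hf : ∀ x, ‖f x‖ ≤ C) {τ : ℝ} (hτ : 0 < τ) :
    ∀ᶠ s : ℝ in 𝓝 0, ∀ x, ‖s • f x‖ ≤ τ := by
  have hlim : Tendsto (fun s : ℝ ↦ ‖s‖ * C) (𝓝 0) (𝓝 0) :=
    (by fun_prop : Continuous fun s : ℝ ↦ ‖s‖ * C).tendsto' _ _ (by simp)
  filter_upwards [hlim.eventually_le_const hτ] with s hs x
  rw [norm_smul]
  exact (mul_le_mul_of_nonneg_left (hf x) (norm_nonneg s)).trans hs

lemma eventually_injective_add_smul {X : E → E} {K : ℝ≥0} (hX : LipschitzWith K X) :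
    ∀ᶠ s : ℝ in 𝓝 0, Function.Injective fun x ↦ x + s • X x := by
  have hlim : Tendsto (fun s : ℝ ↦ ‖s‖₊ * K) (𝓝 0) (𝓝 0) :=
    (by fun_prop : Continuous fun s : ℝ ↦ ‖s‖₊ * K).tendsto' _ _ (by simp)
  filter_upwards [hlim.eventually_lt_const (zero_lt_one.trans_eq inv_one.symm)] with s hs
  have hsX : LipschitzWith (‖s‖₊ * K) fun x ↦ s • X x := (lipschitzWith_smul s).comp hX
  exact (AntilipschitzWith.id.add_lipschitzWith hsX hs).injective

lemma hasFDerivAt_add_smul {X : E → E} (hX : Differentiable ℝ X) (s : ℝ) (x : E) :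
    HasFDerivAt (fun y ↦ y + s • X y) (ContinuousLinearMap.id ℝ E + s • fderiv ℝ X x) x :=
  (hasFDerivAt_id x).add ((hX x).hasFDerivAt.const_smul s)

lemma exists_forall_norm_le_one_le_mul_abs_det {c : ℝ} (hc : 1 < c) :
    ∃ τ > 0, ∀ A : E →L[ℝ] E, ‖A‖ ≤ τ → 1 ≤ c * |(ContinuousLinearMap.id ℝ E + A).det| := by
  have hcont : Continuous fun A : E →L[ℝ] E ↦ c * |(ContinuousLinearMap.id ℝ E + A).det| :=
    continuous_const.mul (ContinuousLinearMap.continuous_det.comp (by fun_prop)).abs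
  have hlim : ∀ᶠ A : E →L[ℝ] E in 𝓝 0, 1 < c * |(ContinuousLinearMap.id ℝ E + A).det| :=
    hcont.continuousAt.eventually_const_lt (by simpa [ContinuousLinearMap.det] using hc)
  obtain ⟨τ, hτ, h⟩ := nhds_basis_closedBall.eventually_iff.1 hlim
  exact ⟨τ, hτ, fun A hA ↦ (h (mem_closedBall_zero_iff.2 hA)).le⟩

variable [FiniteDimensional ℝ E] [MeasurableSpace E] [BorelSpace E] (μ : Measure E)
  [μ.IsAddHaarMeasure]

lemma setLIntegral_comp_le_of_one_le_mul_abs_det {f : E → E} {f' : E → E →L[ℝ] E} {s : Set E}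
    {c : ℝ} (hc : 0 ≤ c) (hs : MeasurableSet s) (hf' : ∀ x ∈ s, HasFDerivWithinAt f (f' x) s x)
    (hf : InjOn f s) (hdet : ∀ x ∈ s, 1 ≤ c * |(f' x).det|) (F : E → ℝ≥0∞) :
    ∫⁻ x in s, F (f x) ∂μ ≤ ENNReal.ofReal c * ∫⁻ y in f '' s, F y ∂μ := by
  rw [lintegral_image_eq_lintegral_abs_det_fderiv_mul μ hs hf' hf,
    ← lintegral_const_mul' _ _ ENNReal.ofReal_ne_top]
  refine setLIntegral_mono' hs fun x hx ↦ ?_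
  rw [← mul_assoc, ← ENNReal.ofReal_mul hc]
  exact le_mul_of_one_le_left' (ENNReal.one_le_ofReal.2 (hdet x hx))

lemma eventually_setLIntegral_comp_add_smul_le {X : E → E} {K : ℝ≥0} (hX : Differentiable ℝ X)
    (hK : LipschitzWith K X) {c : ℝ} (hc : 1 < c) {A : Set E} (hA : MeasurableSet A) :
    ∀ᶠ s : ℝ in 𝓝 0, ∀ F : E → ℝ≥0∞, ∫⁻ x in A, F (x + s • X x) ∂μ ≤
      ENNReal.ofReal c * ∫⁻ y in (fun x ↦ x + s • X x) '' A, F y ∂μ := by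
  obtain ⟨τ, hτ, hdet⟩ := exists_forall_norm_le_one_le_mul_abs_det (E := E) hc
  filter_upwards [eventually_injective_add_smul hK,
    eventually_forall_norm_smul_le (fun x ↦ norm_fderiv_le_of_lipschitz ℝ (x₀ := x) hK) hτ]
    with s hinj hs
  exact setLIntegral_comp_le_of_one_le_mul_abs_det μ (by linarith) hA
    (fun x _ ↦ (hasFDerivAt_add_smul hX s x).hasFDerivWithinAt) hinj.injOn
    fun x _ ↦ hdet _ (hs x)

end NearIdentity

/-! ### Mollification in `L¹` -/

section Mollification

lemma lintegral_enorm_convolution_le {G E E' F : Type*} [AddGroup G] [MeasurableSpace G]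
    [MeasurableAdd₂ G] [MeasurableNeg G] {μ ν : Measure G} [SFinite μ] [SFinite ν]
    [μ.IsAddRightInvariant] [NormedAddCommGroup E] [NormedSpace ℝ E] [NormedAddCommGroup E']
    [NormedSpace ℝ E'] [NormedAddCommGroup F] [NormedSpace ℝ F] (L : E →L[ℝ] E' →L[ℝ] F)
    {f : G → E} {g : G → E'} (hf : AEStronglyMeasurable f ν) (hg : AEStronglyMeasurable g μ) :
    ∫⁻ x, ‖(f ⋆[L, ν] g) x‖ₑ ∂μ ≤ ‖L‖ₑ * (∫⁻ x, ‖f x‖ₑ ∂ν) * ∫⁻ x, ‖g x‖ₑ ∂μ :=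
  calc
    _ ≤ ∫⁻ x, ∫⁻ y, ‖L (f y) (g (x - y))‖ₑ ∂ν ∂μ :=
        lintegral_mono fun _ ↦ enorm_integral_le_lintegral_enorm _
    _ = ∫⁻ y, ∫⁻ x, ‖L (f y) (g (x - y))‖ₑ ∂μ ∂ν :=
        lintegral_lintegral_swap (hf.convolution_integrand L hg).enorm
    _ ≤ ∫⁻ y, ∫⁻ x, ‖L‖ₑ * ‖f y‖ₑ * ‖g (x - y)‖ₑ ∂μ ∂ν := by
        gcongr with y x
        exact (ContinuousLinearMap.le_opENorm _ _).trans
          (mul_le_mul_left (ContinuousLinearMap.le_opENorm _ _) _)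
    _ = ∫⁻ y, ‖L‖ₑ * ‖f y‖ₑ * ∫⁻ x, ‖g x‖ₑ ∂μ ∂ν := by
        refine lintegral_congr fun y ↦ ?_
        rw [lintegral_const_mul' _ _ (by finiteness), lintegral_sub_right_eq_self (‖g ·‖ₑ)]
    _ = _ := by
        rw [lintegral_mul_const'' _ (hf.enorm.const_mul _),
          lintegral_const_mul' _ _ (by finiteness)]

variable {E F : Type*} [NormedAddCommGroup E] [NormedSpace ℝ E] [FiniteDimensional ℝ E]
  [MeasurableSpace E] [BorelSpace E] {μ : Measure E} [μ.IsAddHaarMeasure]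
  [NormedAddCommGroup F] [NormedSpace ℝ F]

lemma lintegral_enorm_normed_convolution_le (φ : ContDiffBump (0 : E)) {g : E → F}
    (hg : AEStronglyMeasurable g μ) :
    ∫⁻ x, ‖(φ.normed μ ⋆[lsmul ℝ ℝ, μ] g) x‖ₑ ∂μ ≤ ∫⁻ x, ‖g x‖ₑ ∂μ := by
  have hφ : ∫⁻ x, ‖φ.normed μ x‖ₑ ∂μ = 1 := by
    simp_rw [Real.enorm_of_nonneg (φ.nonneg_normed _)]
    rw [← ofReal_integral_eq_lintegral_ofReal φ.integrable_normed
      (ae_of_all _ φ.nonneg_normed), φ.integral_normed, ENNReal.ofReal_one]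
  have hL : ‖(lsmul ℝ ℝ : ℝ →L[ℝ] F →L[ℝ] F)‖ₑ ≤ 1 := by
    simpa [← ofReal_norm] using ContinuousLinearMap.opNorm_lsmul_le (𝕜 := ℝ) (R := ℝ) (E := F)
  calc
    _ ≤ ‖(lsmul ℝ ℝ : ℝ →L[ℝ] F →L[ℝ] F)‖ₑ * (∫⁻ x, ‖φ.normed μ x‖ₑ ∂μ) * ∫⁻ x, ‖g x‖ₑ ∂μ :=
        lintegral_enorm_convolution_le _ φ.integrable_normed.aestronglyMeasurable hg
    _ ≤ _ := by
        rw [hφ, mul_one]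
        exact mul_le_of_le_one_left' hL

lemma enorm_normed_convolution_sub_le [CompleteSpace F] (φ : ContDiffBump (0 : E)) {u f : E → F}
    {Φ : E → E} {x : E} {η d : ℝ} (hu : Integrable u μ) (hf : Continuous f)
    (hfd : ∀ y, dist y x ≤ η + η → dist (f y) (f x) ≤ d) (hΦ : dist (Φ x) x ≤ η) (hφ : φ.rOut ≤ η)
    (hd : 0 ≤ d) :
    ‖(φ.normed μ ⋆[lsmul ℝ ℝ, μ] u) (Φ x) - u x‖ₑ ≤
      ‖(φ.normed μ ⋆[lsmul ℝ ℝ, μ] (u - f)) (Φ x)‖ₑ + (ENNReal.ofReal d + ‖u x - f x‖ₑ) := by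
  have hexists {g : E → F} (hg : LocallyIntegrable g μ) :
      ConvolutionExists (φ.normed μ) g (lsmul ℝ ℝ) μ :=
    φ.hasCompactSupport_normed.convolutionExists_left _ φ.continuous_normed hg
  have hsplit : φ.normed μ ⋆[lsmul ℝ ℝ, μ] u =
      φ.normed μ ⋆[lsmul ℝ ℝ, μ] (u - f) + φ.normed μ ⋆[lsmul ℝ ℝ, μ] f := by
    rw [← (hexists (hu.locallyIntegrable.sub hf.locallyIntegrable)).distrib_add
      (hexists hf.locallyIntegrable), sub_add_cancel]
  have hmol : ‖(φ.normed μ ⋆[lsmul ℝ ℝ, μ] f) (Φ x) - f x‖ₑ ≤ ENNReal.ofReal d := by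
    rw [← ofReal_norm, ← dist_eq_norm]
    refine ENNReal.ofReal_le_ofReal <| dist_convolution_le hd φ.support_normed_eq.subset
      φ.nonneg_normed φ.integral_normed hf.aestronglyMeasurable fun y hy ↦ hfd y ?_
    exact (dist_triangle y (Φ x) x).trans (add_le_add ((mem_ball.1 hy).le.trans hφ) hΦ)
  calc
    _ = ‖(φ.normed μ ⋆[lsmul ℝ ℝ, μ] (u - f)) (Φ x) +
          (((φ.normed μ ⋆[lsmul ℝ ℝ, μ] f) (Φ x) - f x) + (f x - u x))‖ₑ := by
        rw [hsplit, Pi.add_apply]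
        congr 1
        abel
    _ ≤ _ := (enorm_add_le _ _).trans
        (add_le_add_right ((enorm_add_le _ _).trans (add_le_add hmol (enorm_sub_rev _ _).le)) _)

lemma exists_lintegral_normed_convolution_sub_le [CompleteSpace F] {Ω : Set E}
    (hΩ : μ Ω ≠ ⊤) {u : E → F} (hu : Integrable u μ) {C δ : ℝ≥0∞}
    (hC : C ≠ ⊤) (hδ : δ ≠ 0) :
    ∃ η > 0, ∀ (φ : ContDiffBump (0 : E)) (Φ : E → E), φ.rOut ≤ η → (∀ x, dist (Φ x) x ≤ η) →
      (∀ G : E → ℝ≥0∞, ∫⁻ x in Ω, G (Φ x) ∂μ ≤ C * ∫⁻ x, G x ∂μ) →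
      ∫⁻ x in Ω, ‖(φ.normed μ ⋆[lsmul ℝ ℝ, μ] u) (Φ x) - u x‖ₑ ∂μ ≤ δ := by
  obtain ⟨d, hd, hdδ⟩ := ENNReal.exists_nnreal_pos_mul_lt (a := C + (μ Ω + 1)) (by finiteness) hδ
  obtain ⟨f, hfc, hfu, hf, hfi⟩ :=
    hu.exists_hasCompactSupport_lintegral_sub_le (ε := d) (by simpa using hd.ne')
  obtain ⟨η, hη, hηd⟩ :=
    Metric.uniformContinuous_iff_le.1 (hfc.uniformContinuous_of_continuous hf) d hd
  refine ⟨η / 2, half_pos hη, fun φ Φ hφ hΦ hC ↦ ?_⟩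
  have hmeas : AEMeasurable (fun x ↦ ‖u x - f x‖ₑ) (μ.restrict Ω) :=
    (hu.sub hfi).aestronglyMeasurable.enorm.restrict
  calc
    _ ≤ ∫⁻ x in Ω, (‖(φ.normed μ ⋆[lsmul ℝ ℝ, μ] (u - f)) (Φ x)‖ₑ + (d + ‖u x - f x‖ₑ)) ∂μ := by
        refine lintegral_mono fun x ↦ ?_
        simpa using enorm_normed_convolution_sub_le φ hu hf
          (fun y hy ↦ hηd (by simpa using hy)) (hΦ x) hφ d.2
    _ = ∫⁻ x in Ω, ‖(φ.normed μ ⋆[lsmul ℝ ℝ, μ] (u - f)) (Φ x)‖ₑ ∂μ +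
          (d * μ Ω + ∫⁻ x in Ω, ‖u x - f x‖ₑ ∂μ) := by
        rw [lintegral_add_right' _ (hmeas.const_add _), lintegral_add_right' _ hmeas,
          setLIntegral_const]
    _ ≤ C * d + (d * μ Ω + d) := by
        gcongr
        · exact (hC fun y ↦ ‖(φ.normed μ ⋆[lsmul ℝ ℝ, μ] (u - f)) y‖ₑ).trans <| mul_le_mul_right
            ((lintegral_enorm_normed_convolution_le φ
              (hu.sub hfi).aestronglyMeasurable).trans hfu) C
        · exact (setLIntegral_le_lintegral _ _).trans hfu
    _ = d * (C + (μ Ω + 1)) := by ring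
    _ ≤ δ := hdδ.le

end Mollification

/-! ### Duality between the total variation and the gradient of a mollification -/

section Duality

open scoped Pointwise

lemma fderiv_neg_of_even {E F : Type*} [NormedAddCommGroup E] [NormedSpace ℝ E]
    [NormedAddCommGroup F] [NormedSpace ℝ F] {f : E → F} (hf : ∀ x, f (-x) = f x) (x : E) :
    fderiv ℝ f (-x) = -fderiv ℝ f x := by
  have hcomp := (ContinuousLinearEquiv.neg ℝ (M := E)).comp_right_fderiv (f := f) (x := x)
  rw [show f ∘ ContinuousLinearEquiv.neg ℝ (M := E) = f from funext hf] at hcomp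
  rw [hcomp]
  ext v
  simp

lemma apply_fderiv_convolution {E F H : Type*} [NormedAddCommGroup E] [NormedSpace ℝ E]
    [FiniteDimensional ℝ E] [MeasurableSpace E] [BorelSpace E] [NormedAddCommGroup F]
    [NormedSpace ℝ F] [CompleteSpace F] [NormedAddCommGroup H] [NormedSpace ℝ H] [CompleteSpace H]
    {μ : Measure E} [μ.IsAddHaarMeasure] {ρ : E → ℝ} (hρc : HasCompactSupport ρ)
    (hρ : ContDiff ℝ 1 ρ) {g : E → F} (hg : LocallyIntegrable g μ)
    (Λ : (E →L[ℝ] F) →L[ℝ] H) (x : E) :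
    Λ (fderiv ℝ (ρ ⋆[lsmul ℝ ℝ, μ] g) x) = ∫ y, Λ ((fderiv ℝ ρ (x - y)).smulRight (g y)) ∂μ := by
  have hexists := (hρc.fderiv (𝕜 := ℝ)).convolutionExists_left
    ((lsmul ℝ ℝ : ℝ →L[ℝ] F →L[ℝ] F).precompL E) (hρ.continuous_fderiv (by simp)) hg x
  rw [(hρc.hasFDerivAt_convolution_left (lsmul ℝ ℝ) hρ hg x).fderiv, convolution_eq_swap,
    ← ContinuousLinearMap.integral_comp_comm Λ hexists.integrable_swap]
  rfl

lemma tsupport_convolution_subset_cthickening {E F : Type*} [NormedAddCommGroup E]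
    [MeasurableSpace E] [NormedAddCommGroup F] [NormedSpace ℝ F]
    {μ : Measure E} {ρ : E → ℝ} {g : E → F} {r : ℝ} {K : Set E} (hρ : Function.support ρ ⊆ ball 0 r)
    (hg : Function.support g ⊆ K) : tsupport (ρ ⋆[lsmul ℝ ℝ, μ] g) ⊆ cthickening r K := by
  refine closure_minimal ?_ isClosed_cthickening
  calc Function.support (ρ ⋆[lsmul ℝ ℝ, μ] g) ⊆ Function.support ρ + Function.support g :=
        support_convolution_subset _
    _ ⊆ ball 0 r + K := add_subset_add hρ hg
    _ = thickening r K := by rw [ball_add, zero_vadd]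
    _ ⊆ cthickening r K := thickening_subset_cthickening r K

/-- The unit vector field of steepest descent of `U`; it is `0` at critical points. -/
def descentDirection {E : Type*} [NormedAddCommGroup E] [InnerProductSpace ℝ E] [CompleteSpace E]
    (U : E → ℝ) (x : E) : E :=
  -(‖gradient U x‖⁻¹ • gradient U x)

section DescentDirection

variable {E : Type*} [NormedAddCommGroup E] [InnerProductSpace ℝ E] [CompleteSpace E] {U : E → ℝ}

lemma norm_gradient_eq_norm_fderiv (U : E → ℝ) (x : E) : ‖gradient U x‖ = ‖fderiv ℝ U x‖ :=
  LinearIsometryEquiv.norm_map _ _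

lemma norm_descentDirection_le_one (U : E → ℝ) (x : E) : ‖descentDirection U x‖ ≤ 1 := by
  rw [descentDirection, norm_neg, norm_smul, norm_inv, norm_norm]
  exact inv_mul_le_one

lemma fderiv_descentDirection (U : E → ℝ) (x : E) :
    fderiv ℝ U x (descentDirection U x) = -‖fderiv ℝ U x‖ := by
  rw [← norm_gradient_eq_norm_fderiv, ← toDual_gradient, descentDirection, map_neg, map_smul,
    InnerProductSpace.toDual_apply_apply, real_inner_self_eq_norm_sq, smul_eq_mul]
  rcases eq_or_ne ‖gradient U x‖ 0 with h | h
  · simp [h]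
  · field_simp

lemma measurable_descentDirection [MeasurableSpace E] [BorelSpace E]
    [SecondCountableTopology E] (hU : ContDiff ℝ 1 U) : Measurable (descentDirection U) := by
  have hgrad : Measurable (gradient U) :=
    ((InnerProductSpace.toDual ℝ E).symm.continuous.comp
      (hU.continuous_fderiv (by simp))).measurable
  exact (hgrad.norm.inv.smul hgrad).neg

end DescentDirection

variable {n : ℕ} {ρ u : EuclideanSpace ℝ (Fin n) → ℝ}
  {G : EuclideanSpace ℝ (Fin n) → EuclideanSpace ℝ (Fin n)}

lemma divg_convolution (hρc : HasCompactSupport ρ) (hρ : ContDiff ℝ 1 ρ)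
    (hG : LocallyIntegrable G) (y : EuclideanSpace ℝ (Fin n)) :
    divg (ρ ⋆ G) y = ∫ x, fderiv ℝ ρ (y - x) (G x) := by
  let div : (EuclideanSpace ℝ (Fin n) →L[ℝ] EuclideanSpace ℝ (Fin n)) →L[ℝ] ℝ :=
    ∑ i : Fin n, (EuclideanSpace.proj (𝕜 := ℝ) i).comp
      (ContinuousLinearMap.apply ℝ _ (EuclideanSpace.single i (1 : ℝ)))
  have hdivg : divg (ρ ⋆ G) y = div (fderiv ℝ (ρ ⋆ G) y) := by simp [divg, div]
  rw [hdivg, apply_fderiv_convolution hρc hρ hG]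
  refine integral_congr_ae (ae_of_all _ fun x ↦ ?_)
  beta_reduce
  conv_rhs => rw [← (EuclideanSpace.basisFun (Fin n) ℝ).sum_repr (G x)]
  simp [div, map_sum, mul_comm]

lemma integrable_mul_fderiv_sub_apply (hρc : HasCompactSupport ρ) (hρ : ContDiff ℝ 1 ρ)
    (hu : Integrable u) (hG : Integrable G) :
    Integrable (Function.uncurry fun y x ↦ u y * fderiv ℝ ρ (y - x) (G x))
      (volume.prod volume) := by
  have hρ' : Continuous (fderiv ℝ ρ) := hρ.continuous_fderiv (by simp)
  obtain ⟨C, hC⟩ := hρ'.bounded_above_of_compact_support (hρc.fderiv (𝕜 := ℝ))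
  refine ((hu.norm.mul_prod hG.norm).const_mul C).mono' ?_ (ae_of_all _ fun p ↦ ?_)
  · refine hu.aestronglyMeasurable.comp_fst.mul ?_
    have hkernel : AEStronglyMeasurable
        (fun p : EuclideanSpace ℝ (Fin n) × EuclideanSpace ℝ (Fin n) ↦ fderiv ℝ ρ (p.1 - p.2))
        (volume.prod volume) :=
      (hρ'.comp (continuous_fst.sub continuous_snd)).aestronglyMeasurable
    exact (ContinuousLinearMap.id ℝ (EuclideanSpace ℝ (Fin n) →L[ℝ] ℝ)).aestronglyMeasurable_comp₂
      hkernel hG.aestronglyMeasurable.comp_snd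
  · calc ‖u p.1 * fderiv ℝ ρ (p.1 - p.2) (G p.2)‖
        = ‖u p.1‖ * ‖fderiv ℝ ρ (p.1 - p.2) (G p.2)‖ := norm_mul _ _
      _ ≤ ‖u p.1‖ * (C * ‖G p.2‖) := by
          gcongr
          exact (fderiv ℝ ρ (p.1 - p.2)).le_of_opNorm_le (hC _) _
      _ = C * (‖u p.1‖ * ‖G p.2‖) := mul_left_comm _ _ _

lemma integral_mul_divg_convolution (hρc : HasCompactSupport ρ) (hρ : ContDiff ℝ 1 ρ)
    (hρeven : ∀ x, ρ (-x) = ρ x) (hu : Integrable u) (hG : Integrable G) :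
    ∫ y, u y * divg (ρ ⋆ G) y = -∫ x, fderiv ℝ (ρ ⋆ u) x (G x) := by
  have hfderiv (x e : EuclideanSpace ℝ (Fin n)) :
      fderiv ℝ (ρ ⋆ u) x e = ∫ y, fderiv ℝ ρ (x - y) e * u y := by
    simpa using apply_fderiv_convolution hρc hρ hu.locallyIntegrable
      (ContinuousLinearMap.apply ℝ ℝ e) x
  calc ∫ y, u y * divg (ρ ⋆ G) y
      = ∫ y, ∫ x, u y * fderiv ℝ ρ (y - x) (G x) := by
        simp_rw [divg_convolution hρc hρ hG.locallyIntegrable, integral_const_mul]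
    _ = ∫ x, ∫ y, u y * fderiv ℝ ρ (y - x) (G x) :=
        integral_integral_swap (integrable_mul_fderiv_sub_apply hρc hρ hu hG)
    _ = ∫ x, -fderiv ℝ (ρ ⋆ u) x (G x) := by
        refine integral_congr_ae (ae_of_all _ fun x ↦ ?_)
        simp only [hfderiv, ← integral_neg]
        refine integral_congr_ae (ae_of_all _ fun y ↦ ?_)
        beta_reduce
        rw [← neg_sub x y, fderiv_neg_of_even hρeven]
        simp [mul_comm]
    _ = -∫ x, fderiv ℝ (ρ ⋆ u) x (G x) := integral_neg _

lemma lintegral_enorm_fderiv_normed_convolution_le {Ω K : Set (EuclideanSpace ℝ (Fin n))}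
    (hΩ : MeasurableSet Ω) (hu : IntegrableOn u Ω) {T : ℝ} (hT : T ∈ upperBounds (tvSet Ω u))
    (φ : ContDiffBump (0 : EuclideanSpace ℝ (Fin n))) (hK : IsCompact K)
    (hKΩ : cthickening φ.rOut K ⊆ Ω) :
    ∫⁻ x in K, ‖fderiv ℝ (φ.normed volume ⋆ Ω.indicator u) x‖ₑ ≤ ENNReal.ofReal T := by
  set U := φ.normed volume ⋆ Ω.indicator u
  have hρc : HasCompactSupport (φ.normed (volume : Measure (EuclideanSpace ℝ (Fin n)))) :=
    φ.hasCompactSupport_normed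
  have hu' : Integrable (Ω.indicator u) := hu.integrable_indicator hΩ
  have hU : ContDiff ℝ 1 U :=
    hρc.contDiff_convolution_left _ φ.contDiff_normed hu'.locallyIntegrable
  let G := K.indicator (descentDirection U)
  have hG_le (x : EuclideanSpace ℝ (Fin n)) : ‖G x‖ ≤ 1 :=
    (norm_indicator_le_norm_self _ _).trans (norm_descentDirection_le_one U x)
  have hG : Integrable G := (integrable_indicator_iff hK.measurableSet).2 <|
    Measure.integrableOn_of_bounded hK.measure_lt_top.ne
      (measurable_descentDirection hU).aestronglyMeasurable
      (ae_of_all _ (norm_descentDirection_le_one U))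
  have hUG : ∫ x, fderiv ℝ U x (G x) = -∫ x in K, ‖fderiv ℝ U x‖ := by
    rw [← integral_neg, ← integral_indicator hK.measurableSet]
    refine integral_congr_ae (ae_of_all _ fun x ↦ ?_)
    by_cases hx : x ∈ K <;> simp [G, hx, fderiv_descentDirection]
  have hsupp : tsupport (φ.normed volume ⋆ G) ⊆ cthickening φ.rOut K :=
    tsupport_convolution_subset_cthickening φ.support_normed_eq.subset support_indicator_subset
  have hmem : ∫ x in K, ‖fderiv ℝ U x‖ ∈ tvSet Ω u := by
    refine ⟨φ.normed volume ⋆ G,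
      hρc.contDiff_convolution_left _ φ.contDiff_normed hG.locallyIntegrable,
      hK.cthickening.of_isClosed_subset (isClosed_tsupport _) hsupp, hsupp.trans hKΩ,
      fun x ↦ ?_, ?_⟩
    · simpa using dist_convolution_le (z₀ := 0) (x₀ := x) zero_le_one φ.support_normed_eq.subset
        φ.nonneg_normed φ.integral_normed hG.aestronglyMeasurable fun y _ ↦ by simpa using hG_le y
    · rw [← neg_neg (∫ x in K, _), ← hUG, ← integral_mul_divg_convolution hρc φ.contDiff_normed
        φ.normed_neg hu' hG, ← integral_indicator hΩ]
      simp only [indicator_mul_left]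
  rw [← ofReal_integral_norm_eq_lintegral_enorm
    ((hU.continuous_fderiv (by simp)).continuousOn.integrableOn_compact hK)]
  exact ENNReal.ofReal_le_ofReal (hT hmem)

end Duality

/-! ### Strict approximation by smooth functions -/

section StrictApproximation

lemma exists_inward_deformation {E : Type*} [NormedAddCommGroup E] [NormedSpace ℝ E]
    [FiniteDimensional ℝ E] [MeasurableSpace E] [BorelSpace E] (μ : Measure E) [μ.IsAddHaarMeasure]
    {Ω : Set E} (hΩo : IsOpen Ω) (hΩb : Bornology.IsBounded Ω)
    (hΩ : ∀ z ∈ frontier Ω, ∃ v, IsInwardDirection Ω z v) {τ : ℝ} (hτ : 0 < τ) :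
    ∃ (Φ : E → E) (K : Set E), ContDiff ℝ ∞ Φ ∧ IsCompact K ∧ K ⊆ Ω ∧ (∀ x, dist (Φ x) x ≤ τ) ∧
      (∀ x, ‖fderiv ℝ Φ x‖ ≤ 1 + τ) ∧
      ∀ F : E → ℝ≥0∞,
        ∫⁻ x in Ω, F (Φ x) ∂μ ≤ ENNReal.ofReal (1 + τ) * ∫⁻ y in K, F y ∂μ := by
  have hinward : ∀ z ∈ closure Ω, ∃ v, IsInwardDirection Ω z v := fun z hz ↦ by
    by_cases hzΩ : z ∈ Ω
    · exact ⟨0, .of_mem hΩo hzΩ 0⟩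
    · exact hΩ z (by rw [hΩo.frontier_eq]; exact ⟨hz, hzΩ⟩)
  obtain ⟨X, hX, hXc, hXΩ⟩ := exists_contDiff_isInwardDirection hΩb hinward
  have hXd : Differentiable ℝ X := hX.differentiable (by simp)
  obtain ⟨K, hK⟩ := hX.lipschitzWith_of_hasCompactSupport hXc (by simp)
  obtain ⟨C, hC⟩ := hX.continuous.bounded_above_of_compact_support hXc
  obtain ⟨s, hmaps, hdisp, hder, hvol⟩ :=
    ((eventually_mapsTo_add_smul hΩb.isCompact_closure hX.continuous hXΩ).and
      (nhdsWithin_le_nhds ((eventually_forall_norm_smul_le hC hτ).and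
        ((eventually_forall_norm_smul_le
          (fun x ↦ norm_fderiv_le_of_lipschitz ℝ (x₀ := x) hK) hτ).and
          (eventually_setLIntegral_comp_add_smul_le μ hXd hK (lt_add_of_pos_right 1 hτ)
            isClosed_closure.measurableSet))))).exists
  have hΦ : ContDiff ℝ ∞ fun x ↦ x + s • X x := contDiff_id.add (hX.const_smul s)
  refine ⟨fun x ↦ x + s • X x, _, hΦ, hΩb.isCompact_closure.image hΦ.continuous,
    hmaps.image_subset, fun x ↦ ?_, fun x ↦ ?_,
    fun F ↦ (lintegral_mono_set subset_closure).trans (hvol F)⟩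
  · simpa [dist_eq_norm] using hdisp x
  · rw [(hasFDerivAt_add_smul hXd s x).fderiv]
    exact (norm_add_le _ _).trans (add_le_add ContinuousLinearMap.norm_id_le (hder x))

variable {n : ℕ} {Ω : Set (EuclideanSpace ℝ (Fin n))} {u : EuclideanSpace ℝ (Fin n) → ℝ}

lemma zero_mem_tvSet (Ω : Set (EuclideanSpace ℝ (Fin n))) (u : EuclideanSpace ℝ (Fin n) → ℝ) :
    0 ∈ tvSet Ω u :=
  ⟨fun _ ↦ 0, contDiff_const, .zero, by simp [tsupport], by simp, by simp [divg]⟩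

lemma setLIntegral_enorm_fderiv_comp_le {E F : Type*} [NormedAddCommGroup E] [NormedSpace ℝ E]
    [NormedAddCommGroup F] [NormedSpace ℝ F] [MeasurableSpace E] {μ : Measure E} {U : E → F}
    {Φ : E → E} (hU : Differentiable ℝ U) (hΦ : Differentiable ℝ Φ) {c : ℝ} {b : ℝ≥0∞} {s t : Set E}
    (hder : ∀ x, ‖fderiv ℝ Φ x‖ ≤ c)
    (hvol : ∀ G : E → ℝ≥0∞, ∫⁻ x in s, G (Φ x) ∂μ ≤ b * ∫⁻ y in t, G y ∂μ) :
    ∫⁻ x in s, ‖fderiv ℝ (U ∘ Φ) x‖ₑ ∂μ ≤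
      ENNReal.ofReal c * (b * ∫⁻ y in t, ‖fderiv ℝ U y‖ₑ ∂μ) :=
  calc ∫⁻ x in s, ‖fderiv ℝ (U ∘ Φ) x‖ₑ ∂μ
      ≤ ∫⁻ x in s, ENNReal.ofReal c * ‖fderiv ℝ U (Φ x)‖ₑ ∂μ := by
        refine lintegral_mono fun x ↦ ?_
        rw [fderiv_comp x (hU _) (hΦ x), ← ofReal_norm, ← ofReal_norm,
          ← ENNReal.ofReal_mul ((norm_nonneg _).trans (hder x)), mul_comm]
        exact ENNReal.ofReal_le_ofReal <| (ContinuousLinearMap.opNorm_comp_le _ _).trans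
          (mul_le_mul_of_nonneg_left (hder x) (norm_nonneg _))
    _ ≤ _ := by
        rw [lintegral_const_mul' _ _ ENNReal.ofReal_ne_top]
        gcongr
        exact hvol fun y ↦ ‖fderiv ℝ U y‖ₑ

lemma setLIntegral_enorm_fderiv_normed_convolution_comp_le (hΩ : MeasurableSet Ω)
    (hu : IntegrableOn u Ω) {T : ℝ} (hT : T ∈ upperBounds (tvSet Ω u))
    (φ : ContDiffBump (0 : EuclideanSpace ℝ (Fin n))) {K s : Set (EuclideanSpace ℝ (Fin n))}
    (hK : IsCompact K) (hKΩ : cthickening φ.rOut K ⊆ Ω)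
    {Φ : EuclideanSpace ℝ (Fin n) → EuclideanSpace ℝ (Fin n)} (hΦ : Differentiable ℝ Φ) {c : ℝ}
    (hder : ∀ x, ‖fderiv ℝ Φ x‖ ≤ c)
    (hvol : ∀ G : EuclideanSpace ℝ (Fin n) → ℝ≥0∞,
      ∫⁻ x in s, G (Φ x) ≤ ENNReal.ofReal c * ∫⁻ y in K, G y) :
    ∫⁻ x in s, ‖fderiv ℝ ((φ.normed volume ⋆ Ω.indicator u) ∘ Φ) x‖ₑ ≤
      ENNReal.ofReal (c * (c * T)) := by
  have hc : 0 ≤ c := (norm_nonneg _).trans (hder 0)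
  have hU : ContDiff ℝ ∞ (φ.normed volume ⋆ Ω.indicator u) :=
    φ.hasCompactSupport_normed.contDiff_convolution_left _ φ.contDiff_normed
      (hu.integrable_indicator hΩ).locallyIntegrable
  refine (setLIntegral_enorm_fderiv_comp_le (hU.differentiable (by simp)) hΦ hder hvol).trans ?_
  rw [ENNReal.ofReal_mul hc, ENNReal.ofReal_mul hc]
  gcongr
  exact lintegral_enorm_fderiv_normed_convolution_le hΩ hu hT φ hK hKΩ

lemma exists_contDiff_strict_approximation (hΩo : IsOpen Ω) (hΩb : Bornology.IsBounded Ω)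
    (hΩ : ∀ z ∈ frontier Ω, ∃ v, IsInwardDirection Ω z v) (hu : IntegrableOn u Ω)
    (hbv : BddAbove (tvSet Ω u)) {δ : ℝ} (hδ : 0 < δ) :
    ∃ w : EuclideanSpace ℝ (Fin n) → ℝ, ContDiff ℝ ∞ w ∧
      ∫⁻ x in Ω, ‖w x - u x‖ₑ ≤ ENNReal.ofReal δ ∧
      ∫⁻ x in Ω, ‖fderiv ℝ w x‖ₑ ≤ ENNReal.ofReal (sSup (tvSet Ω u) + δ) := by
  set T := sSup (tvSet Ω u)
  have hu' := hu.integrable_indicator hΩo.measurableSet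
  obtain ⟨η, hη, hL1⟩ := exists_lintegral_normed_convolution_sub_le hΩb.measure_lt_top.ne hu'
    (C := 2) (by simp) (ENNReal.ofReal_pos.2 hδ).ne'
  have hlim : Tendsto (fun τ : ℝ ↦ (1 + τ) * ((1 + τ) * T)) (𝓝[>] 0) (𝓝 T) :=
    ((by fun_prop : Continuous fun τ : ℝ ↦ (1 + τ) * ((1 + τ) * T)).tendsto' 0 _
      (by simp)).mono_left nhdsWithin_le_nhds
  obtain ⟨τ, ⟨hτ, hτ1⟩, hτη, hτT⟩ := ((eventually_mem_set.2 (Ioo_mem_nhdsGT one_pos)).and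
    ((eventually_mem_set.2 (Ioo_mem_nhdsGT hη)).and
      (hlim.eventually_le_const (lt_add_of_pos_right T hδ)))).exists
  obtain ⟨Φ, K, hΦ, hK, hKΩ, hdist, hder, hvol⟩ :=
    exists_inward_deformation volume hΩo hΩb hΩ hτ
  obtain ⟨r, hr, hrΩ⟩ := hK.exists_cthickening_subset_open hΩo hKΩ
  let φ : ContDiffBump (0 : EuclideanSpace ℝ (Fin n)) :=
    ⟨min r η / 2, min r η, half_pos (lt_min hr hη), half_lt_self (lt_min hr hη)⟩
  set U := φ.normed volume ⋆ Ω.indicator u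
  have hU : ContDiff ℝ ∞ U :=
    φ.hasCompactSupport_normed.contDiff_convolution_left _ φ.contDiff_normed hu'.locallyIntegrable
  refine ⟨U ∘ Φ, hU.comp hΦ, ?_, ?_⟩
  · refine (setLIntegral_congr_fun hΩo.measurableSet fun x hx ↦ ?_).trans_le
      (hL1 φ Φ (min_le_right _ _) (fun x ↦ (hdist x).trans hτη.2.le) fun F ↦ ?_)
    · simp only [Function.comp_apply, indicator_of_mem hx, U]
    · calc ∫⁻ x in Ω, F (Φ x) ≤ ENNReal.ofReal (1 + τ) * ∫⁻ y in K, F y := hvol F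
        _ ≤ 2 * ∫⁻ y, F y := by
          gcongr
          · exact ENNReal.ofReal_le_of_le_toReal (by simp; linarith)
          · exact Measure.restrict_le_self
  · refine (setLIntegral_enorm_fderiv_normed_convolution_comp_le hΩo.measurableSet hu
      (isLUB_csSup ⟨0, zero_mem_tvSet Ω u⟩ hbv).1 φ hK
      ((cthickening_mono (min_le_left _ _) _).trans hrΩ) (hΦ.differentiable (by simp))
      hder hvol).trans (ENNReal.ofReal_le_ofReal hτT)

end StrictApproximation

/-! ### The diffuse interface around a level set -/

section DiffuseInterface

lemma lintegral_measure_abs_sub_lt {α : Type*} [MeasurableSpace α] (μ : Measure α) [SFinite μ]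
    {w m : α → ℝ} (hw : Measurable w) (hm : Measurable m) :
    ∫⁻ t : ℝ, μ {x | |w x - t| < m x} = 2 * ∫⁻ x, ENNReal.ofReal (m x) ∂μ := by
  have hS : MeasurableSet {p : α × ℝ | |w p.1 - p.2| < m p.1} :=
    measurableSet_lt (by fun_prop) (by fun_prop)
  have hball (x : α) : {t | |w x - t| < m x} = ball (w x) (m x) := by
    ext t
    rw [mem_ofPred_eq, mem_ball, dist_comm, Real.dist_eq]
  calc ∫⁻ t : ℝ, μ {x | |w x - t| < m x}
      = ∫⁻ x, volume {t | |w x - t| < m x} ∂μ :=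
        (Measure.prod_apply_symm hS).symm.trans (Measure.prod_apply hS)
    _ = 2 * ∫⁻ x, ENNReal.ofReal (m x) ∂μ := by
        rw [← lintegral_const_mul' _ _ (by simp)]
        refine lintegral_congr fun x ↦ ?_
        rw [hball, Real.volume_ball, ENNReal.ofReal_mul zero_le_two, ENNReal.ofReal_ofNat]

lemma exists_measure_abs_sub_lt_le {α : Type*} [MeasurableSpace α] (μ : Measure α) [SFinite μ]
    {w m : α → ℝ} (hw : Measurable w) (hm : Measurable m) {a : ℝ} (ha : 0 < a) :
    ∃ t, |t| ≤ a ∧ μ {x | |w x - t| < m x} ≤ (∫⁻ x, ENNReal.ofReal (m x) ∂μ) /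
      ENNReal.ofReal a := by
  have hmeas : Measurable fun t : ℝ ↦ μ {x | |w x - t| < m x} :=
    measurable_measure_prodMk_right (measurableSet_lt (by fun_prop) (by fun_prop) :
      MeasurableSet {p : α × ℝ | |w p.1 - p.2| < m p.1})
  have hvol : volume (Icc (-a) a) = 2 * ENNReal.ofReal a := by
    rw [Real.volume_Icc, show a - -a = 2 * a by ring, ENNReal.ofReal_mul zero_le_two,
      ENNReal.ofReal_ofNat]
  obtain ⟨t, ht, hle⟩ := exists_le_setLAverage (μ := (volume : Measure ℝ)) (s := Icc (-a) a)
    (by simp [hvol, ha]) (by simp [hvol, ENNReal.mul_eq_top]) hmeas.aemeasurable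
  refine ⟨t, abs_le.2 ht, hle.trans ?_⟩
  rw [setLAverage_eq, hvol,
    ← ENNReal.mul_div_mul_left (∫⁻ x, _ ∂μ) _ two_ne_zero ENNReal.ofNat_ne_top,
    ← lintegral_measure_abs_sub_lt μ hw hm]
  gcongr
  exact Measure.restrict_le_self

lemma exists_contDiff_norm_le_le_norm_add {E F : Type*} [NormedAddCommGroup E] [NormedSpace ℝ E]
    [NormedAddCommGroup F] [InnerProductSpace ℝ F] {k : WithTop ℕ∞} {g : E → F}
    (hg : ContDiff ℝ k g) {η : ℝ} (hη : 0 < η) :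
    ∃ m : E → ℝ, ContDiff ℝ k m ∧ (∀ x, η ≤ m x) ∧ (∀ x, ‖g x‖ ≤ m x) ∧
      ∀ x, m x ≤ ‖g x‖ + η := by
  refine ⟨fun x ↦ √(‖g x‖ ^ 2 + η ^ 2), ((hg.norm_sq ℝ).add contDiff_const).sqrt fun x ↦ ?_,
    fun x ↦ ?_, fun x ↦ ?_, fun x ↦ ?_⟩
  · positivity
  · exact Real.le_sqrt_of_sq_le (le_add_of_nonneg_left (by positivity))
  · exact Real.le_sqrt_of_sq_le (le_add_of_nonneg_right (by positivity))
  · exact Real.sqrt_le_iff.2 ⟨by positivity, by nlinarith [norm_nonneg (g x)]⟩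

lemma hasFDerivAt_div {E : Type*} [NormedAddCommGroup E] [NormedSpace ℝ E] {f g : E → ℝ}
    {f' g' : E →L[ℝ] ℝ} {x : E} (hf : HasFDerivAt f f' x) (hg : HasFDerivAt g g' x)
    (hgx : g x ≠ 0) :
    HasFDerivAt (fun y ↦ f y / g y) ((g x)⁻¹ • (f' - (f x / g x) • g')) x := by
  simp only [div_eq_mul_inv]
  refine (hf.mul ((hasDerivAt_inv hgx).comp_hasFDerivAt x hg)).congr_fderiv ?_
  ext v
  simp only [Function.comp_apply, add_apply, sub_apply, smul_apply, smul_eq_mul]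
  field_simp
  ring

lemma norm_fderiv_div_le {E : Type*} [NormedAddCommGroup E] [NormedSpace ℝ E] {f g : E → ℝ}
    {x : E} (hf : DifferentiableAt ℝ f x) (hg : DifferentiableAt ℝ g x) (hgx : 0 < g x) :
    ‖fderiv ℝ (fun y ↦ f y / g y) x‖ ≤
      (‖fderiv ℝ f x‖ + |f x / g x| * ‖fderiv ℝ g x‖) / g x := by
  rw [(hasFDerivAt_div hf.hasFDerivAt hg.hasFDerivAt hgx.ne').fderiv, norm_smul, norm_inv,
    Real.norm_of_nonneg hgx.le, inv_mul_eq_div]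
  gcongr
  exact (norm_sub_le _ _).trans_eq (by rw [norm_smul, Real.norm_eq_abs])

/-- The recovery profile: the transition profile evaluated at `(w - t) / (ε m)`. With
`m ≈ ‖∇w‖`, the quotient `(w - t) / m` takes the place of the signed distance to the level
set `{w = t}`. -/
def recoveryProfile {E : Type*} (κ ε t : ℝ) (w m : E → ℝ) (x : E) : ℝ :=
  transitionProfile κ ((w x - t) / (ε * m x))

namespace recoveryProfile

variable {E : Type*} {κ ε t δ : ℝ} {w m : E → ℝ} {x : E}

lemma mem_Icc (hκ : 0 < κ) (x : E) : recoveryProfile κ ε t w m x ∈ Icc (-1) 1 :=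
  transitionProfile.mem_Icc hκ _

lemma one_add_le_abs_div_iff (hε : 0 < ε) (hm : 0 < m x) :
    1 + κ ≤ |(w x - t) / (ε * m x)| ↔ (1 + κ) * (ε * m x) ≤ |w x - t| := by
  have hεm := mul_pos hε hm
  rw [abs_div, abs_of_pos hεm, le_div_iff₀ hεm]

lemma abs_eq_one (hκ : 0 < κ) (hε : 0 < ε) (hm : 0 < m x)
    (hx : (1 + κ) * (ε * m x) ≤ |w x - t|) : |recoveryProfile κ ε t w m x| = 1 :=
  transitionProfile.abs_eq_one hκ ((one_add_le_abs_div_iff hε hm).2 hx)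

lemma abs_sub_le (hκ : 0 < κ) (hε : 0 < ε) (hm : 0 < m x) (hδ : 0 < δ) (ht : |t| ≤ 1 - δ)
    (hmε : ε * ((1 + κ) * m x) ≤ δ / 2) {y : ℝ} (hy : |y| = 1) :
    |recoveryProfile κ ε t w m x - y| ≤ 4 / δ * |w x - y| := by
  have hεm := mul_pos hε hm
  obtain ⟨hv1, hv2⟩ := transitionProfile.mem_Icc hκ ((w x - t) / (ε * m x))
  obtain ⟨ht1, ht2⟩ := abs_le.1 ht
  by_cases hfar : δ / 2 ≤ |w x - y|
  · calc |recoveryProfile κ ε t w m x - y| ≤ 1 + 1 :=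
          (abs_sub _ _).trans (add_le_add (abs_le.2 ⟨hv1, hv2⟩) hy.le)
      _ = 4 / δ * (δ / 2) := by field_simp; norm_num
      _ ≤ 4 / δ * |w x - y| := by gcongr
  · obtain ⟨hw1, hw2⟩ := abs_lt.1 (not_le.1 hfar)
    suffices h : recoveryProfile κ ε t w m x = y by
      rw [h, sub_self, abs_zero]
      positivity
    rcases eq_or_eq_neg_of_abs_eq hy with rfl | rfl
    · exact transitionProfile.eq_one hκ ((le_div_iff₀ hεm).2 (by linarith))
    · exact transitionProfile.eq_neg_one hκ ((div_le_iff₀ hεm).2 (by linarith))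

variable [NormedAddCommGroup E] [NormedSpace ℝ E]

lemma hasFDerivAt (hε : ε ≠ 0) (hw : DifferentiableAt ℝ w x) (hm : DifferentiableAt ℝ m x)
    (hm0 : m x ≠ 0) :
    HasFDerivAt (recoveryProfile κ ε t w m)
      (deriv (transitionProfile κ) ((w x - t) / (ε * m x)) •
        fderiv ℝ (fun y ↦ (w y - t) / (ε * m y)) x) x :=
  (transitionProfile.differentiable κ _).hasDerivAt.comp_hasFDerivAt x
    (hasFDerivAt_div (hw.sub_const t).hasFDerivAt (hm.const_mul ε).hasFDerivAt
      (mul_ne_zero hε hm0)).differentiableAt.hasFDerivAt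

lemma fderiv_eq_zero (hκ : 0 < κ) (hε : 0 < ε) (hw : DifferentiableAt ℝ w x)
    (hm : DifferentiableAt ℝ m x) (hm0 : 0 < m x) (hx : (1 + κ) * (ε * m x) ≤ |w x - t|) :
    fderiv ℝ (recoveryProfile κ ε t w m) x = 0 := by
  rw [(hasFDerivAt hε.ne' hw hm hm0.ne').fderiv,
    transitionProfile.deriv_eq_zero hκ ((one_add_le_abs_div_iff hε hm0).2 hx), zero_smul]

lemma norm_fderiv_le (hκ : 0 < κ) (hε : 0 < ε) (hw : DifferentiableAt ℝ w x)
    (hm : DifferentiableAt ℝ m x) (hm0 : 0 < m x) (hwm : ‖fderiv ℝ w x‖ ≤ m x)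
    (hmε : ε * ((1 + κ) * ‖fderiv ℝ m x‖) ≤ κ * m x) :
    ‖fderiv ℝ (recoveryProfile κ ε t w m) x‖ ≤ (1 + κ) / ε := by
  rcases le_or_gt ((1 + κ) * (ε * m x)) |w x - t| with hx | hx
  · rw [fderiv_eq_zero hκ hε hw hm hm0 hx, norm_zero]
    positivity
  set q := (w x - t) / (ε * m x)
  have hq : |q| ≤ 1 + κ := le_of_not_ge fun h ↦ hx.not_ge ((one_add_le_abs_div_iff hε hm0).1 h)
  rw [(hasFDerivAt hε.ne' hw hm hm0.ne').fderiv, norm_smul, Real.norm_eq_abs]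
  calc |deriv (transitionProfile κ) q| * ‖fderiv ℝ (fun y ↦ (w y - t) / (ε * m y)) x‖
      ≤ 1 * ((‖fderiv ℝ w x‖ + |q| * (ε * ‖fderiv ℝ m x‖)) / (ε * m x)) := by
        have h := norm_fderiv_div_le (hw.sub_const t) (hm.const_mul ε) (mul_pos hε hm0)
        rw [fderiv_sub_const, fderiv_const_mul hm, norm_smul, Real.norm_of_nonneg hε.le] at h
        gcongr
        exact transitionProfile.abs_deriv_le_one hκ _
    _ ≤ 1 * ((m x + (1 + κ) * (ε * ‖fderiv ℝ m x‖)) / (ε * m x)) := by gcongr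
    _ ≤ 1 * ((m x + κ * m x) / (ε * m x)) := by
        gcongr 1 * ((m x + ?_) / _)
        linarith
    _ = (1 + κ) / ε := by field_simp

end recoveryProfile

lemma Jeps_recoveryProfile_le {n : ℕ} {Ω : Set (EuclideanSpace ℝ (Fin n))} (hΩ : MeasurableSet Ω)
    {κ ε t : ℝ} {w m : EuclideanSpace ℝ (Fin n) → ℝ} (hκ : 0 < κ) (hε : 0 < ε)
    (hw : Differentiable ℝ w) (hm : Differentiable ℝ m) (hm0 : ∀ x, 0 < m x)
    (hwm : ∀ x, ‖fderiv ℝ w x‖ ≤ m x)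
    (hmε : ∀ x ∈ Ω, ε * ((1 + κ) * ‖fderiv ℝ m x‖) ≤ κ * m x) :
    Jeps Ω ε (recoveryProfile κ ε t w m) ≤ ENNReal.ofReal (((1 + κ) ^ 2 + 1) / ε) *
      volume.restrict Ω {x | |w x - t| < (1 + κ) * (ε * m x)} := by
  set v := recoveryProfile κ ε t w m
  have hv : DifferentiableOn ℝ v Ω := fun x _ ↦ (recoveryProfile.hasFDerivAt hε.ne' (hw x) (hm x)
    (hm0 x).ne').differentiableAt.differentiableWithinAt
  have hS : MeasurableSet {x | |w x - t| < (1 + κ) * (ε * m x)} :=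
    have hwc := hw.continuous
    have hmc := hm.continuous
    (isOpen_lt (by fun_prop) (by fun_prop)).measurableSet
  rw [Jeps, if_pos hv, ← lintegral_indicator_const hS]
  refine setLIntegral_mono' hΩ fun x hx ↦ ?_
  rw [norm_gradient_eq_norm_fderiv]
  by_cases hxS : |w x - t| < (1 + κ) * (ε * m x)
  · rw [indicator_of_mem (by exact hxS)]
    refine ENNReal.ofReal_le_ofReal ?_
    calc ε * ‖fderiv ℝ v x‖ ^ 2 + (if |v x| < 1 then 1 else 0) / ε
        ≤ ε * ((1 + κ) / ε) ^ 2 + 1 / ε := by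
          gcongr
          · exact recoveryProfile.norm_fderiv_le hκ hε (hw x) (hm x) (hm0 x) (hwm x) (hmε x hx)
          · split_ifs <;> norm_num
      _ = ((1 + κ) ^ 2 + 1) / ε := by field_simp
  · have hfar := not_lt.1 hxS
    simp [v, recoveryProfile.fderiv_eq_zero hκ hε (hw x) (hm x) (hm0 x) hfar,
      recoveryProfile.abs_eq_one hκ hε (hm0 x) hfar]

lemma eventually_exists_Jeps_le {n : ℕ} {Ω : Set (EuclideanSpace ℝ (Fin n))}
    (hΩ : MeasurableSet Ω) (hΩb : Bornology.IsBounded Ω) {w m : EuclideanSpace ℝ (Fin n) → ℝ}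
    (hw : Differentiable ℝ w) (hm : ContDiff ℝ 1 m) {κ η δ : ℝ} (hκ : 0 < κ) (hη : 0 < η)
    (hδ : 0 < δ) (hδ1 : δ < 1) (hηm : ∀ x, η ≤ m x) (hwm : ∀ x, ‖fderiv ℝ w x‖ ≤ m x) :
    ∀ᶠ ε in 𝓝[>] 0, ∃ v : EuclideanSpace ℝ (Fin n) → ℝ, (∀ x, v x ∈ Icc (-1) 1) ∧
      (∀ x ∈ Ω, ∀ y, |y| = 1 → |v x - y| ≤ 4 / δ * |w x - y|) ∧
      Jeps Ω ε v ≤ ENNReal.ofReal (((1 + κ) ^ 2 + 1) * (1 + κ) / (1 - δ)) *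
        ∫⁻ x in Ω, ENNReal.ofReal (m x) := by
  obtain ⟨C, hC⟩ := hΩb.isCompact_closure.exists_bound_of_continuousOn hm.continuous.continuousOn
  obtain ⟨D, hD⟩ := hΩb.isCompact_closure.exists_bound_of_continuousOn
    (hm.continuous_fderiv one_ne_zero).continuousOn
  have hlim (c : ℝ) : Tendsto (fun ε : ℝ ↦ ε * ((1 + κ) * c)) (𝓝[>] 0) (𝓝 0) :=
    ((by fun_prop : Continuous fun ε : ℝ ↦ ε * ((1 + κ) * c)).tendsto' 0 _
      (by simp)).mono_left nhdsWithin_le_nhds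
  filter_upwards [self_mem_nhdsWithin, (hlim C).eventually_le_const (half_pos hδ),
    (hlim D).eventually_le_const (mul_pos hκ hη)] with ε (hε : 0 < ε) hεC hεD
  have hm0 (x) : 0 < m x := hη.trans_le (hηm x)
  have hmε (x) (hx : x ∈ Ω) : ε * ((1 + κ) * m x) ≤ δ / 2 := by
    refine le_trans ?_ hεC
    gcongr
    exact (le_abs_self _).trans (hC x (subset_closure hx))
  have hdmε (x) (hx : x ∈ Ω) : ε * ((1 + κ) * ‖fderiv ℝ m x‖) ≤ κ * m x := by
    refine le_trans ?_ (hεD.trans (mul_le_mul_of_nonneg_left (hηm x) hκ.le))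
    gcongr
    exact hD x (subset_closure hx)
  obtain ⟨t, ht, hlevel⟩ := exists_measure_abs_sub_lt_le (volume.restrict Ω)
    hw.continuous.measurable
    ((hm.continuous.measurable.const_mul ε).const_mul (1 + κ)) (sub_pos.2 hδ1)
  refine ⟨recoveryProfile κ ε t w m, recoveryProfile.mem_Icc hκ, fun x hx y hy ↦
    recoveryProfile.abs_sub_le hκ hε (hm0 x) hδ ht (hmε x hx) hy, ?_⟩
  refine (Jeps_recoveryProfile_le hΩ hκ hε hw (hm.differentiable one_ne_zero) hm0 hwm hdmε).trans
    ((mul_le_mul_right hlevel _).trans_eq ?_)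
  have hscale : ∫⁻ x in Ω, ENNReal.ofReal ((1 + κ) * (ε * m x)) =
      ENNReal.ofReal ((1 + κ) * ε) * ∫⁻ x in Ω, ENNReal.ofReal (m x) := by
    rw [← lintegral_const_mul' _ _ ENNReal.ofReal_ne_top]
    simp only [← mul_assoc, ENNReal.ofReal_mul (mul_pos (by positivity : 0 < 1 + κ) hε).le]
  rw [hscale, ENNReal.mul_div_right_comm, ← mul_assoc,
    ← ENNReal.ofReal_div_of_pos (sub_pos.2 hδ1), ← ENNReal.ofReal_mul (by positivity)]
  congr 2
  field_simp

end DiffuseInterface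
/-! ### The recovery family -/

section RecoveryFamily

variable {n : ℕ} {Ω : Set (EuclideanSpace ℝ (Fin n))} {u : EuclideanSpace ℝ (Fin n) → ℝ}

lemma contDiff_gradient {F : Type*} [NormedAddCommGroup F] [InnerProductSpace ℝ F]
    [CompleteSpace F] {w : F → ℝ} {k l : WithTop ℕ∞} (hw : ContDiff ℝ k w) (hlk : l + 1 ≤ k) :
    ContDiff ℝ l (gradient w) :=
  (InnerProductSpace.toDual ℝ F).symm.toContinuousLinearEquiv.contDiff.comp (hw.fderiv_right hlk)

lemma setLIntegral_le_ofReal_of_le_enorm_add {α F : Type*} [MeasurableSpace α]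
    [NormedAddCommGroup F] {μ : Measure α} {s : Set α} (hs : μ s ≠ ⊤) {f : α → F} {m : α → ℝ}
    {T η : ℝ} (hT : 0 ≤ T) (hη : 0 ≤ η) (hf : ∫⁻ x in s, ‖f x‖ₑ ∂μ ≤ ENNReal.ofReal T)
    (hm : ∀ x, m x ≤ ‖f x‖ + η) :
    ∫⁻ x in s, ENNReal.ofReal (m x) ∂μ ≤ ENNReal.ofReal (T + η * μ.real s) :=
  calc ∫⁻ x in s, ENNReal.ofReal (m x) ∂μ
      ≤ ∫⁻ x in s, (‖f x‖ₑ + ENNReal.ofReal η) ∂μ := by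
        refine lintegral_mono fun x ↦ ?_
        rw [← ofReal_norm, ← ENNReal.ofReal_add (norm_nonneg _) hη]
        exact ENNReal.ofReal_le_ofReal (hm x)
    _ = ∫⁻ x in s, ‖f x‖ₑ ∂μ + ENNReal.ofReal η * μ s := by
        rw [lintegral_add_right _ measurable_const, setLIntegral_const]
    _ ≤ ENNReal.ofReal T + ENNReal.ofReal η * μ s := by gcongr
    _ = ENNReal.ofReal (T + η * μ.real s) := by
        rw [ENNReal.ofReal_add hT (by positivity), ENNReal.ofReal_mul hη, ofReal_measureReal hs]

lemma exists_contDiff_smoothed_gradient_norm (hΩo : IsOpen Ω) (hΩb : Bornology.IsBounded Ω)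
    (hΩ : ∀ z ∈ frontier Ω, ∃ v, IsInwardDirection Ω z v) (hu : IntegrableOn u Ω)
    (hbv : BddAbove (tvSet Ω u)) {η δ : ℝ} (hη : 0 < η) (hδ : 0 < δ) :
    ∃ w m : EuclideanSpace ℝ (Fin n) → ℝ, Differentiable ℝ w ∧ ContDiff ℝ 1 m ∧
      (∀ x, η ≤ m x) ∧ (∀ x, ‖fderiv ℝ w x‖ ≤ m x) ∧
      ∫⁻ x in Ω, ‖w x - u x‖ₑ ≤ ENNReal.ofReal δ ∧
      ∫⁻ x in Ω, ENNReal.ofReal (m x) ≤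
        ENNReal.ofReal (sSup (tvSet Ω u) + η * (1 + volume.real Ω)) := by
  obtain ⟨w, hw, hwu, hwT⟩ :=
    exists_contDiff_strict_approximation hΩo hΩb hΩ hu hbv (lt_min hη hδ)
  obtain ⟨m, hm, hηm, hwm, hmw⟩ := exists_contDiff_norm_le_le_norm_add
    (contDiff_gradient (contDiff_infty.1 hw 2) one_add_one_eq_two.le) hη
  simp only [norm_gradient_eq_norm_fderiv] at hwm hmw
  have hT : 0 ≤ sSup (tvSet Ω u) := le_csSup hbv (zero_mem_tvSet Ω u)
  refine ⟨w, m, hw.differentiable (by simp), hm, hηm, hwm,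
    hwu.trans (ENNReal.ofReal_le_ofReal (min_le_right _ _)),
    (setLIntegral_le_ofReal_of_le_enorm_add hΩb.measure_lt_top.ne (add_nonneg hT hη.le) hη.le
      (hwT.trans (ENNReal.ofReal_le_ofReal (by gcongr; exact min_le_left _ _))) hmw).trans_eq ?_⟩
  ring_nf

lemma tendsto_energy_bound (T V : ℝ) :
    Tendsto (fun τ : ℝ ↦ ((1 + τ) ^ 2 + 1) * (1 + τ) / (1 - τ) * (T + τ * (1 + V)))
      (𝓝[>] 0) (𝓝 (2 * T)) := by
  have hcont : ContinuousAt
      (fun τ : ℝ ↦ ((1 + τ) ^ 2 + 1) * (1 + τ) / (1 - τ) * (T + τ * (1 + V))) 0 :=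
    (ContinuousAt.div (by fun_prop) (by fun_prop) (by norm_num)).mul (by fun_prop)
  refine (hcont.tendsto.mono_left nhdsWithin_le_nhds).trans_eq ?_
  norm_num

lemma eventually_exists_recovery (hΩo : IsOpen Ω) (hΩb : Bornology.IsBounded Ω)
    (hΩ : ∀ z ∈ frontier Ω, ∃ v, IsInwardDirection Ω z v)
    (hum : AEStronglyMeasurable u (volume.restrict Ω))
    (hu : ∀ᵐ x ∂volume.restrict Ω, |u x| = 1) (hbv : BddAbove (tvSet Ω u)) {δ : ℝ} (hδ : 0 < δ) :
    ∀ᶠ ε in 𝓝[>] 0, ∃ v : EuclideanSpace ℝ (Fin n) → ℝ, (∀ x, v x ∈ Icc (-1) 1) ∧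
      ∫⁻ x in Ω, ‖v x - u x‖ₑ ≤ ENNReal.ofReal δ ∧
      Jeps Ω ε v ≤ Jzero Ω u + ENNReal.ofReal δ := by
  set T := sSup (tvSet Ω u)
  have hT : 0 ≤ T := le_csSup hbv (zero_mem_tvSet Ω u)
  have hui : IntegrableOn u Ω := .of_bound hΩb.measure_lt_top hum 1 (hu.mono fun _ hx ↦ hx.le)
  obtain ⟨τ, ⟨hτ, hτ1⟩, hτT⟩ := ((eventually_mem_set.2 (Ioo_mem_nhdsGT one_pos)).and
    ((tendsto_energy_bound T (volume.real Ω)).eventually_le_const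
      (lt_add_of_pos_right _ hδ))).exists
  set c := ((1 + τ) ^ 2 + 1) * (1 + τ) / (1 - τ)
  obtain ⟨w, m, hw, hm, hτm, hwm, hwu, hmT⟩ := exists_contDiff_smoothed_gradient_norm hΩo hΩb hΩ
    hui hbv hτ (mul_pos (div_pos hτ four_pos) hδ)
  filter_upwards [eventually_exists_Jeps_le hΩo.measurableSet hΩb hw hm hτ hτ hτ hτ1 hτm hwm]
    with ε ⟨v, hv, hvw, hJ⟩
  refine ⟨v, hv, ?_, ?_⟩
  · have hvu : ∀ᵐ x ∂volume.restrict Ω, ‖v x - u x‖ ≤ 4 / τ * ‖w x - u x‖ := by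
      filter_upwards [hu, ae_restrict_mem hΩo.measurableSet] with x hux hx using hvw x hx _ hux
    calc ∫⁻ x in Ω, ‖v x - u x‖ₑ ≤ ENNReal.ofReal (4 / τ) * ∫⁻ x in Ω, ‖w x - u x‖ₑ := by
          simpa only [eLpNorm_one_eq_lintegral_enorm] using
            eLpNorm_le_mul_eLpNorm_of_ae_le_mul hvu 1
      _ ≤ ENNReal.ofReal (4 / τ) * ENNReal.ofReal (τ / 4 * δ) := by gcongr
      _ = ENNReal.ofReal δ := by
          rw [← ENNReal.ofReal_mul (by positivity)]
          congr 1
          field_simp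
  · have hc : 0 ≤ c := div_nonneg (by positivity) (sub_nonneg.2 hτ1.le)
    calc Jeps Ω ε v ≤ ENNReal.ofReal c * ENNReal.ofReal (T + τ * (1 + volume.real Ω)) :=
          hJ.trans (mul_le_mul_right hmT _)
      _ ≤ ENNReal.ofReal (2 * T + δ) := by
          rw [← ENNReal.ofReal_mul hc]
          exact ENNReal.ofReal_le_ofReal hτT
      _ = Jzero Ω u + ENNReal.ofReal δ := by
          rw [Jzero, if_pos ⟨hu, hbv⟩, ENNReal.ofReal_add (by positivity) hδ.le]

lemma exists_tendsto_zero_of_eventually_exists_le {ι V : Type*} [Nonempty V] {l : Filter ι}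
    {p : ι → V → ℝ≥0∞} {g : ι → ℝ≥0∞} (hg : Tendsto g l (𝓝 0)) (hg0 : ∀ᶠ i in l, g i ≠ 0)
    (h : ∀ δ : ℝ, 0 < δ → ∀ᶠ i in l, ∃ v, p i v ≤ ENNReal.ofReal δ) :
    ∃ v : ι → V, Tendsto (fun i ↦ p i (v i)) l (𝓝 0) := by
  have hnear (i) : ∃ v, g i ≠ 0 → p i v ≤ (⨅ v, p i v) + g i := by
    by_cases hi : g i = 0 ∨ ⨅ v, p i v = ⊤
    · exact ⟨Classical.arbitrary V, fun hgi ↦ by simp [hi.resolve_left hgi]⟩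
    · obtain ⟨hgi, htop⟩ := not_or.1 hi
      obtain ⟨v, hv⟩ := iInf_lt_iff.1 (ENNReal.lt_add_right htop hgi)
      exact ⟨v, fun _ ↦ hv.le⟩
  choose v hv using hnear
  have hinf : Tendsto (fun i ↦ ⨅ v, p i v) l (𝓝 0) := by
    refine ENNReal.tendsto_nhds_zero.2 fun δ hδ ↦ ?_
    obtain ⟨r, -, hr, hrδ⟩ := ENNReal.lt_iff_exists_real_btwn.1 hδ
    filter_upwards [h r (ENNReal.ofReal_pos.1 hr)] with i ⟨v, hv⟩
    exact (iInf_le_of_le v hv).trans hrδ.le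
  refine ⟨v, tendsto_of_tendsto_of_tendsto_of_le_of_le' tendsto_const_nhds
    (by simpa using hinf.add hg) (by simp) ?_⟩
  filter_upwards [hg0] with i hi using hv i hi

lemma tendsto_integral_abs_of_tendsto_lintegral_enorm {α ι : Type*} [MeasurableSpace α]
    {μ : Measure α} {l : Filter ι} {f : ι → α → ℝ}
    (h : Tendsto (fun i ↦ ∫⁻ x, ‖f i x‖ₑ ∂μ) l (𝓝 0)) :
    Tendsto (fun i ↦ ∫ x, |f i x| ∂μ) l (𝓝 0) :=
  tendsto_zero_iff_enorm_tendsto_zero.2 <|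
    tendsto_of_tendsto_of_tendsto_of_le_of_le tendsto_const_nhds h (fun _ ↦ zero_le) fun i ↦
      (enorm_integral_le_lintegral_enorm _).trans_eq (by simp only [Real.enorm_abs])

lemma Jeps_one (Ω : Set (EuclideanSpace ℝ (Fin n))) (ε : ℝ) :
    Jeps Ω ε (fun _ ↦ 1) = 0 := by
  rw [Jeps, if_pos (differentiableOn_const 1)]
  simp [gradient]

lemma integral_one_sub_eq_zero_of_not_aestronglyMeasurable
    (hum : ¬AEStronglyMeasurable u (volume.restrict Ω)) (hu : ∀ x, u x ≤ 1) :
    ∫ x in Ω, |1 - u x| = 0 := by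
  simp only [abs_of_nonneg (sub_nonneg.2 (hu _))]
  refine integral_undef fun h ↦ hum ?_
  simpa [Pi.sub_def] using (aestronglyMeasurable_const (b := (1 : ℝ))).sub h.aestronglyMeasurable

theorem stmt_11_general (hΩo : IsOpen Ω) (hΩb : Bornology.IsBounded Ω)
    (hΩ : ∀ z ∈ frontier Ω, ∃ v, IsInwardDirection Ω z v) (hu : ∀ x, u x ∈ Icc (-1 : ℝ) 1)
    {ι : Type*} {l : Filter ι} [l.NeBot] {εs : ι → ℝ} (hε : Tendsto εs l (𝓝[>] 0)) :
    ∃ us : ι → EuclideanSpace ℝ (Fin n) → ℝ, (∀ i x, us i x ∈ Icc (-1 : ℝ) 1) ∧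
      Tendsto (fun i ↦ ∫ x in Ω, |us i x - u x|) l (𝓝 0) ∧
      limsup (fun i ↦ Jeps Ω (εs i) (us i)) l ≤ Jzero Ω u := by
  -- The Bochner integral of a function that is not a.e. measurable is `0`.
  by_cases hum : ¬AEStronglyMeasurable u (volume.restrict Ω)
  · refine ⟨fun _ _ ↦ 1, fun _ _ ↦ by simp, ?_, ?_⟩
    · simp [integral_one_sub_eq_zero_of_not_aestronglyMeasurable hum fun x ↦ (hu x).2]
    · simp [Jeps_one]
  by_cases hJ : Jzero Ω u = ⊤
  · exact ⟨fun _ ↦ u, fun _ ↦ hu, by simp, by simp [hJ]⟩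
  obtain ⟨hu1, hbv⟩ := by_contra fun h ↦ hJ (if_neg h)
  let V := {v : EuclideanSpace ℝ (Fin n) → ℝ // ∀ x, v x ∈ Icc (-1 : ℝ) 1}
  let excess (i : ι) (v : V) : ℝ≥0∞ :=
    max (∫⁻ x in Ω, ‖v.1 x - u x‖ₑ) (Jeps Ω (εs i) v - Jzero Ω u)
  obtain ⟨us, hus⟩ : ∃ us : ι → V, Tendsto (fun i ↦ excess i (us i)) l (𝓝 0) := by
    have : Nonempty V := ⟨u, hu⟩
    refine exists_tendsto_zero_of_eventually_exists_le (g := fun i ↦ ENNReal.ofReal (εs i))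
      (by simpa using ENNReal.tendsto_ofReal (tendsto_nhdsWithin_iff.1 hε).1) ?_ fun δ hδ ↦ ?_
    · filter_upwards [(tendsto_nhdsWithin_iff.1 hε).2] with i hi using (ENNReal.ofReal_pos.2 hi).ne'
    · filter_upwards [hε.eventually (eventually_exists_recovery hΩo hΩb hΩ (not_not.1 hum) hu1 hbv
        hδ)] with i ⟨v, hv, hvu, hvJ⟩
      exact ⟨⟨v, hv⟩, max_le hvu (tsub_le_iff_left.2 hvJ)⟩
  refine ⟨fun i ↦ us i, fun i ↦ (us i).2, ?_, ?_⟩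
  · exact tendsto_integral_abs_of_tendsto_lintegral_enorm
      (tendsto_of_tendsto_of_tendsto_of_le_of_le tendsto_const_nhds hus (fun _ ↦ zero_le)
        fun i ↦ le_max_left _ _)
  · have hlim : Tendsto (fun i ↦ Jzero Ω u + excess i (us i)) l (𝓝 (Jzero Ω u)) := by
      simpa using hus.const_add (Jzero Ω u)
    refine (limsup_le_limsup (Eventually.of_forall fun i ↦ ?_)).trans_eq hlim.limsup_eq
    exact tsub_le_iff_left.1 (le_max_right _ _)

end RecoveryFamily

/-- **Γ-limsup (recovery sequence) inequality for the free boundary Allen–Cahn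
functional.** If `Ω ⊂ ℝⁿ` is bounded open with smooth boundary and
`u ∈ L¹(Ω;[-1,1])`, then for every sequence `ε_i → 0⁺` there is a recovery
sequence `u_{ε_i} ∈ L¹(Ω;[-1,1])` with `u_{ε_i} → u` in `L¹(Ω)` and
`limsup_{i→∞} J_{ε_i}(u_{ε_i}) ≤ J₀(u)`. -/
theorem stmt_11 (n : ℕ) (Ω : Set (EuclideanSpace ℝ (Fin n))) (hΩo : IsOpen Ω)
    (hΩb : Bornology.IsBounded Ω) (hΩs : HasSmoothBoundary Ω)
    (u : EuclideanSpace ℝ (Fin n) → ℝ)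
    (hu : ∀ x, u x ∈ Icc (-1 : ℝ) 1)
    (εs : ℕ → ℝ) (hεpos : ∀ i, 0 < εs i) (hεlim : Tendsto εs atTop (nhds 0)) :
    ∃ us : ℕ → EuclideanSpace ℝ (Fin n) → ℝ,
      (∀ i x, us i x ∈ Icc (-1 : ℝ) 1) ∧
      Tendsto (fun i => ∫ x in Ω, |us i x - u x|) atTop (nhds 0) ∧
      Filter.limsup (fun i => Jeps Ω (εs i) (us i)) atTop ≤ Jzero Ω u :=
  stmt_11_general hΩo hΩb (fun _ hz ↦ hΩs.exists_isInwardDirection hz) hu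
    (tendsto_nhdsWithin_iff.2 ⟨hεlim, .of_forall hεpos⟩)
end
end
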